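/- arXiv:2509.08155 — 10 statements merged into one kernel-verified Lean document; each statement's English description precedes it below -/
import Mathlib

section
/- Fix an integer N ≥ 1 and reals L > 0 and D > 0. Call a triple ((α_k)_{k=1}^N, (δ_k)_{k=1}^N, ω) feasible if α_1 = 1, 0 < α_k < 1 for 2 ≤ k ≤ N, δ_k > 0 for all k, 0 < ω < 1/L, δ_1 = ω, α_k δ_k ≤ ω for every k, and k ↦ α_k/(δ_k Γ_k) is nonincreasing for k = 1, …, N, where Γ_k is built from (α_k). For a feasible triple define the complexity upper bound B(α, δ, ω) := (Σ_{k=1}^N Γ_k^{-1})^{-1} · D/(ω²(1 − Lω)). Then the triple given by ᾱ_1 = 1, ᾱ_{k+1} = 2/(1 + √(1 + 4/ᾱ_k²)), δ̄_k = ω̄/ᾱ_k, and ω̄ = 2/(3L) is feasible, and it minimizes B over all feasible triples: B(ᾱ, δ̄, ω̄) ≤ B(α, δ, ω) for every feasible ((α_k), (δ_k), ω). -/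
/-!
Feasibility forces `α_k² ≤ Γ_k`: the quantity `α_k / (δ_k Γ_k)` is at most its value `1/ω` at
`k = 1`, while `δ_k ≤ ω / α_k` (`sq_le_Gam`). Writing `G_k = 1/Γ_k`, this reads
`G_k - √G_k ≤ G_{k-1}`. The sequence `ᾱ` satisfies `ᾱ_k² = Γ̄_k` (`Gam_alphaBar`), i.e. it attains
equality in this recursion, and `y ↦ y - √y` is increasing on `[1, ∞)`, so by induction
`G_k ≤ 1/ᾱ_k²` (`sq_alphaBar_le_Gam`); hence `ᾱ` maximizes `∑ 1/Γ_k` termwise. Independently, `ω²(1 - Lω)`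
is maximal at `ω = 2/(3L)` because `4 - 27u² + 27u³ = (3u - 2)²(3u + 1)` with `u = Lω`.
-/

/-- `Γ_k` built from a damping sequence `α`: `Γ_1 = 1` and
`Γ_k = (1 - α_k) Γ_{k-1}` for `k ≥ 2`; equivalently `Γ_k = ∏_{j=2}^k (1 - α_j)`. -/
noncomputable def Gam (α : ℕ → ℝ) (k : ℕ) : ℝ := ∏ j ∈ Finset.Icc 2 k, (1 - α j)

/-- Feasibility of a triple `((α_k), (δ_k), ω)` for the nonconvex accelerated gradient
method specialized to a convex objective with constant gradient-correction step `ω`. -/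
def Feasible (N : ℕ) (L : ℝ) (α δ : ℕ → ℝ) (ω : ℝ) : Prop :=
  α 1 = 1 ∧
  (∀ k, 2 ≤ k → k ≤ N → 0 < α k ∧ α k < 1) ∧
  (∀ k, 1 ≤ k → k ≤ N → 0 < δ k) ∧
  (0 < ω ∧ ω < 1 / L) ∧
  δ 1 = ω ∧
  (∀ k, 1 ≤ k → k ≤ N → α k * δ k ≤ ω) ∧
  (∀ k, 1 ≤ k → k < N →
    α (k + 1) / (δ (k + 1) * Gam α (k + 1)) ≤ α k / (δ k * Gam α k))

/-- The complexity upper bound `B(α, δ, ω) = (∑_{k=1}^N Γ_k⁻¹)⁻¹ · D/(ω²(1 - Lω))`. -/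
noncomputable def complexityBound (N : ℕ) (D L : ℝ) (α : ℕ → ℝ) (ω : ℝ) : ℝ :=
  (∑ k ∈ Finset.Icc 1 N, (Gam α k)⁻¹)⁻¹ * (D / (ω ^ 2 * (1 - L * ω)))

/-- The damping sequence `ᾱ_1 = 1`, `ᾱ_{k+1} = 2/(1 + √(1 + 4/ᾱ_k²))`. -/
noncomputable def alphaBar : ℕ → ℝ
  | 0 => 1
  | 1 => 1
  | (k + 2) => 2 / (1 + Real.sqrt (1 + 4 / (alphaBar (k + 1)) ^ 2))

lemma Gam_one (α : ℕ → ℝ) : Gam α 1 = 1 := by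
  simp [Gam]

lemma Gam_succ (α : ℕ → ℝ) {k : ℕ} (hk : 1 ≤ k) :
    Gam α (k + 1) = Gam α k * (1 - α (k + 1)) := by
  unfold Gam
  rw [Finset.prod_Icc_succ_top (by omega)]

lemma Gam_pos {N : ℕ} {α : ℕ → ℝ} (hα : ∀ k, 2 ≤ k → k ≤ N → 0 < α k ∧ α k < 1)
    {k : ℕ} (hk : k ≤ N) : 0 < Gam α k := by
  apply Finset.prod_pos
  intro j hj
  rw [Finset.mem_Icc] at hj
  linarith [(hα j hj.1 (hj.2.trans hk)).2]

lemma alphaBar_pos : ∀ k, 0 < alphaBar k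
  | 0 => by simp [alphaBar]
  | 1 => by simp [alphaBar]
  | k + 2 => by
    rw [alphaBar]
    positivity

lemma alphaBar_lt_one (k : ℕ) : alphaBar (k + 2) < 1 := by
  have h := alphaBar_pos (k + 1)
  rw [alphaBar, div_lt_one (by positivity)]
  have : 1 < Real.sqrt (1 + 4 / (alphaBar (k + 1)) ^ 2) := by
    apply Real.lt_sqrt_of_sq_lt
    have : 0 < 4 / (alphaBar (k + 1)) ^ 2 := by positivity
    linarith
  linarith

/-- The defining recursion, rationalized: `ᾱ_{k+1}` is the positive root of
`x² = ᾱ_k² (1 - x)`. -/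
lemma alphaBar_sq {k : ℕ} (hk : 1 ≤ k) :
    alphaBar (k + 1) ^ 2 = alphaBar k ^ 2 * (1 - alphaBar (k + 1)) := by
  obtain ⟨m, rfl⟩ : ∃ m, k = m + 1 := ⟨k - 1, by omega⟩
  have h := alphaBar_pos (m + 1)
  rw [alphaBar]
  have hs := Real.sq_sqrt (show 0 ≤ 1 + 4 / (alphaBar (m + 1)) ^ 2 by positivity)
  have hs0 := Real.sqrt_nonneg (1 + 4 / (alphaBar (m + 1)) ^ 2)
  set s := Real.sqrt (1 + 4 / (alphaBar (m + 1)) ^ 2)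
  have hs' : (s ^ 2 - 1) * alphaBar (m + 1) ^ 2 = 4 := by
    rw [hs]
    field_simp
    ring
  have : (1 + s) ≠ 0 := by positivity
  field_simp
  linear_combination -hs'

lemma Gam_alphaBar {k : ℕ} (hk : 1 ≤ k) : Gam alphaBar k = alphaBar k ^ 2 := by
  induction k, hk using Nat.le_induction with
  | base => simp [Gam_one, alphaBar]
  | succ k hk ih => rw [Gam_succ _ hk, ih, alphaBar_sq hk]

/-- The step sizes `δ` enter the problem only through this consequence of feasibility. -/
lemma sq_le_Gam {N : ℕ} {L : ℝ} {α δ : ℕ → ℝ} {ω : ℝ} (h : Feasible N L α δ ω)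
    {k : ℕ} (hk : 1 ≤ k) (hkN : k ≤ N) : α k ^ 2 ≤ Gam α k := by
  obtain ⟨h1, hα, hδ, ⟨hω, -⟩, hδ1, hαδ, hmono⟩ := h
  have key : ∀ j, 1 ≤ j → j ≤ N → α j / (δ j * Gam α j) ≤ 1 / ω := by
    intro j hj
    induction j, hj using Nat.le_induction with
    | base => intro _; simp [h1, hδ1, Gam_one]
    | succ j hj ih => intro hjN; exact (hmono j hj (by omega)).trans (ih (by omega))
  have hk1 := key k hk hkN
  have hG := Gam_pos hα hkN
  have hd := hδ k hk hkN
  have hα0 : 0 < α k := by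
    rcases hk.eq_or_lt with rfl | h2
    · simp [h1]
    · exact (hα k h2 hkN).1
  rw [div_le_div_iff₀ (by positivity) hω] at hk1
  have h3 := mul_le_mul_of_nonneg_left (hαδ k hk hkN) hα0.le
  have h4 : δ k * α k ^ 2 ≤ δ k * Gam α k := by nlinarith
  exact le_of_mul_le_mul_left h4 hd

/-- Comparison step: if `g ≥ h` and `a` satisfies the constraint `a² ≤ g (1 - a)` that `b`
satisfies with equality for `h`, then the updated value `g (1 - a)` still dominates
`h (1 - b) = b²`. -/
lemma step_le {g h a b : ℝ} (hh : 0 < h) (hgh : h ≤ g) (hb0 : 0 < b)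
    (hb : b ^ 2 = h * (1 - b)) (ha1 : a < 1) (ha : a ^ 2 ≤ g * (1 - a)) :
    b ^ 2 ≤ g * (1 - a) := by
  by_contra! hlt
  -- If `b ≤ a` then `b² ≤ a² ≤ g (1 - a)`. Otherwise `1 - b < 1 - a` and `b² = h (1 - b) ≤ g (1 - a)`.
  have hab : a < b := by
    by_contra! hba
    nlinarith
  nlinarith [mul_le_mul hgh (show 1 - b ≤ 1 - a by linarith)
    (by nlinarith [sq_nonneg b]) (by linarith)]

lemma sq_alphaBar_le_Gam {N : ℕ} {L : ℝ} {α δ : ℕ → ℝ} {ω : ℝ} (h : Feasible N L α δ ω)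
    {k : ℕ} (hk : 1 ≤ k) : k ≤ N → alphaBar k ^ 2 ≤ Gam α k := by
  induction k, hk using Nat.le_induction with
  | base => intro _; simp [Gam_one, alphaBar]
  | succ k hk ih =>
    intro hkN
    have hsq := sq_le_Gam h (by omega) hkN
    rw [Gam_succ _ hk] at hsq ⊢
    exact step_le (pow_pos (alphaBar_pos k) 2) (ih (by omega)) (alphaBar_pos _)
      (alphaBar_sq hk) (h.2.1 (k + 1) (by omega) hkN).2 hsq

lemma feasible_alphaBar (N : ℕ) {L : ℝ} (hL : 0 < L) :
    Feasible N L alphaBar (fun k => (2 / (3 * L)) / alphaBar k) (2 / (3 * L)) := by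
  have hω : 0 < 2 / (3 * L) := by positivity
  refine ⟨by simp [alphaBar], ?_, ?_, ⟨hω, ?_⟩, by simp [alphaBar], ?_, ?_⟩
  · intro k hk _
    obtain ⟨m, rfl⟩ : ∃ m, k = m + 2 := ⟨k - 2, by omega⟩
    exact ⟨alphaBar_pos _, alphaBar_lt_one m⟩
  · intro k _ _
    exact div_pos hω (alphaBar_pos k)
  · rw [div_lt_div_iff₀ (by positivity) hL]
    linarith
  · intro k _ _
    exact (mul_div_cancel₀ _ (alphaBar_pos k).ne').le
  · -- Since `Γ̄_k = ᾱ_k²`, the monotone quantity is constantly equal to `1/ω̄`.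
    have hconst : ∀ j, 1 ≤ j →
        alphaBar j / ((2 / (3 * L)) / alphaBar j * Gam alphaBar j) = 1 / (2 / (3 * L)) := by
      intro j hj
      rw [Gam_alphaBar hj]
      have := (alphaBar_pos j).ne'
      field_simp
    intro k hk _
    exact ((hconst (k + 1) (by omega)).trans (hconst k hk).symm).le

lemma omega_factor_le {L ω : ℝ} (hL : 0 < L) (hω : 0 < ω) :
    ω ^ 2 * (1 - L * ω) ≤ (2 / (3 * L)) ^ 2 * (1 - L * (2 / (3 * L))) := by
  have e : (2 / (3 * L)) ^ 2 * (1 - L * (2 / (3 * L))) = 4 / (27 * L ^ 2) := by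
    field_simp
    norm_num
  rw [e, le_div_iff₀ (by positivity)]
  have : 0 ≤ (3 * (L * ω) - 2) ^ 2 * (3 * (L * ω) + 1) := by positivity
  linarith

theorem stmt1 (N : ℕ) (hN : 1 ≤ N) (L D : ℝ) (hL : 0 < L) (hD : 0 < D) :
    Feasible N L alphaBar (fun k => (2 / (3 * L)) / alphaBar k) (2 / (3 * L)) ∧
    ∀ α δ : ℕ → ℝ, ∀ ω : ℝ, Feasible N L α δ ω →
      complexityBound N D L alphaBar (2 / (3 * L)) ≤ complexityBound N D L α ω := by
  refine ⟨feasible_alphaBar N hL, ?_⟩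
  intro α δ ω h
  have hω := h.2.2.2.1.1
  have hLω : 0 < 1 - L * ω := by
    have := h.2.2.2.1.2
    rw [lt_div_iff₀ hL] at this
    linarith
  have hpos : 0 < ∑ k ∈ Finset.Icc 1 N, (Gam α k)⁻¹ := by
    apply Finset.sum_pos
    · intro k hk
      exact inv_pos.2 (Gam_pos h.2.1 (Finset.mem_Icc.1 hk).2)
    · exact Finset.nonempty_Icc.2 hN
  have hsum : ∑ k ∈ Finset.Icc 1 N, (Gam α k)⁻¹ ≤ ∑ k ∈ Finset.Icc 1 N, (Gam alphaBar k)⁻¹ := by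
    apply Finset.sum_le_sum
    intro k hk
    rw [Finset.mem_Icc] at hk
    rw [Gam_alphaBar hk.1]
    exact inv_anti₀ (pow_pos (alphaBar_pos k) 2) (sq_alphaBar_le_Gam h hk.1 hk.2)
  have hP : 0 < ω ^ 2 * (1 - L * ω) := by positivity
  have hPle := omega_factor_le hL hω
  unfold complexityBound
  exact mul_le_mul (inv_anti₀ hpos hsum) (div_le_div_of_nonneg_left hD.le hP hPle)
    (div_nonneg hD.le (hP.le.trans hPle)) (inv_nonneg.2 hpos.le)
end

section
/- Define ᾱ_1 = 1 and ᾱ_{k+1} = 2/(1 + √(1 + 4/ᾱ_k²)) for k ≥ 1, and let Γ_k be built from (ᾱ_k). Then the complexity upper bound is O(1/N): for every pair of constants C₁, C₂ ≥ 0 there exists C > 0 such that for all integers N ≥ 1, (Σ_{k=1}^N Γ_k^{-1})^{-1}·C₁ + (Γ_N · Σ_{k=1}^N Γ_k^{-1})^{-1}·C₂ ≤ C/N. -/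
/-- The reciprocal `t_k = 1 / ᾱ_k` of the damping sequence. -/
noncomputable def tBar (k : ℕ) : ℝ := (alphaBar k)⁻¹

lemma tBar_one : tBar 1 = 1 := by simp [tBar, alphaBar]

lemma tBar_succ (k : ℕ) : tBar (k + 2) = (1 + Real.sqrt (1 + 4 * tBar (k + 1) ^ 2)) / 2 := by
  simp only [tBar, alphaBar]
  rw [inv_div, inv_pow, div_eq_mul_inv 4]

lemma tBar_sq (k : ℕ) : tBar (k + 2) ^ 2 - tBar (k + 2) = tBar (k + 1) ^ 2 := by
  have h := Real.sq_sqrt (show 0 ≤ 1 + 4 * tBar (k + 1) ^ 2 by positivity)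
  rw [tBar_succ]
  linarith

lemma tBar_bounds (k : ℕ) : ((k : ℝ) + 2) / 2 ≤ tBar (k + 1) ∧ tBar (k + 1) ≤ k + 1 := by
  induction k with
  | zero => simp [tBar_one]
  | succ k ih =>
    obtain ⟨h1, h2⟩ := ih
    have hk : (0 : ℝ) ≤ k := Nat.cast_nonneg k
    have h3 : 2 * tBar (k + 1) ≤ Real.sqrt (1 + 4 * tBar (k + 1) ^ 2) :=
      Real.le_sqrt_of_sq_le (by nlinarith)
    have h4 : Real.sqrt (1 + 4 * tBar (k + 1) ^ 2) ≤ 2 * tBar (k + 1) + 1 :=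
      Real.sqrt_le_iff.2 ⟨by linarith, by nlinarith⟩
    rw [tBar_succ]
    push_cast
    constructor <;> linarith

lemma tBar_pos (k : ℕ) : 0 < tBar (k + 1) :=
  lt_of_lt_of_le (by positivity) (tBar_bounds k).1

lemma Gam_inv (k : ℕ) : (Gam alphaBar (k + 1))⁻¹ = tBar (k + 1) ^ 2 := by
  induction k with
  | zero => simp [Gam, tBar_one]
  | succ k ih =>
    have hG : Gam alphaBar (k + 2) = Gam alphaBar (k + 1) * (1 - alphaBar (k + 2)) :=
      Finset.prod_Icc_succ_top (by omega) _
    have hp := tBar_pos k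
    have hq : 0 < tBar (k + 2) := tBar_pos (k + 1)
    have ha : 1 - alphaBar (k + 2) = tBar (k + 1) ^ 2 / tBar (k + 2) ^ 2 := by
      have : alphaBar (k + 2) = (tBar (k + 2))⁻¹ := by simp [tBar]
      rw [this, ← tBar_sq]
      field_simp
    rw [hG, mul_inv, ih, ha]
    field_simp

lemma sum_lower (N : ℕ) :
    (N : ℝ) ^ 3 / 12 ≤ ∑ k ∈ Finset.Icc 1 N, (Gam alphaBar k)⁻¹ := by
  induction N with
  | zero => simp
  | succ N ih =>
    rw [Finset.sum_Icc_succ_top (by omega), Gam_inv]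
    have h := pow_le_pow_left₀ (by positivity) (tBar_bounds N).1 2
    have hN : (0 : ℝ) ≤ N := Nat.cast_nonneg N
    push_cast
    nlinarith

theorem stmt2 (C₁ C₂ : ℝ) (hC₁ : 0 ≤ C₁) (hC₂ : 0 ≤ C₂) :
    ∃ C : ℝ, 0 < C ∧ ∀ N : ℕ, 1 ≤ N →
      (∑ k ∈ Finset.Icc 1 N, (Gam alphaBar k)⁻¹)⁻¹ * C₁ +
        (Gam alphaBar N * ∑ k ∈ Finset.Icc 1 N, (Gam alphaBar k)⁻¹)⁻¹ * C₂ ≤ C / N := by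
  refine ⟨12 * C₁ + 12 * C₂ + 1, by positivity, fun N hN => ?_⟩
  obtain ⟨n, rfl⟩ : ∃ n, N = n + 1 := ⟨N - 1, by omega⟩
  have hS := sum_lower (n + 1)
  set S := ∑ k ∈ Finset.Icc 1 (n + 1), (Gam alphaBar k)⁻¹
  have hM : (1 : ℝ) ≤ ((n + 1 : ℕ) : ℝ) := by exact_mod_cast hN
  have ht : tBar (n + 1) ≤ ((n + 1 : ℕ) : ℝ) := by
    push_cast
    exact (tBar_bounds n).2
  set M : ℝ := ((n + 1 : ℕ) : ℝ)
  have hM0 : 0 < M := by linarith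
  have hS0 : 0 < M ^ 3 / 12 := by positivity
  have hSi : S⁻¹ ≤ 12 / M ^ 3 := by
    rw [← inv_div]
    exact inv_anti₀ hS0 hS
  have h1 : S⁻¹ ≤ 12 / M := hSi.trans <| by
    have : M ≤ M ^ 3 := le_self_pow₀ hM (by norm_num)
    gcongr
  have h2 : (Gam alphaBar (n + 1) * S)⁻¹ ≤ 12 / M := by
    rw [mul_inv, Gam_inv]
    calc tBar (n + 1) ^ 2 * S⁻¹ ≤ M ^ 2 * (12 / M ^ 3) :=
          mul_le_mul (pow_le_pow_left₀ (tBar_pos n).le ht 2) hSi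
            (inv_nonneg.2 (hS0.le.trans hS)) (by positivity)
      _ = 12 / M := by field_simp
  calc S⁻¹ * C₁ + (Gam alphaBar (n + 1) * S)⁻¹ * C₂
      ≤ 12 / M * C₁ + 12 / M * C₂ := by gcongr
    _ = (12 * C₁ + 12 * C₂) / M := by ring
    _ ≤ (12 * C₁ + 12 * C₂ + 1) / M :=
        div_le_div_of_nonneg_right (by linarith) hM0.le
end

section
/- Define ᾱ_1 = 1 and ᾱ_{k+1} = 2/(1 + √(1 + 4/ᾱ_k²)) for k ≥ 1. For an integer k ≥ 8 let b̄_k := (2 + 5·log(2/k) + √(9·(log(2/k))² + 4))/(2·log(2/k)). Then: (i) b̄_k ∈ (0, 1) and b̄_k is the unique minimizer over b ∈ (0, 1) of the map b ↦ (2/k)^b/((1−b)(4−b)), so that among all pairs (a, b) with a > 0, 0 < b < 1 and a(1−b)·2^{2−b} − a·b(1−b)·2^{−b} − 1 ≥ 0, the lower bound 2/((1 + a·k^{−b})·k + 1) is maximized at b = b̄_k and ā_k := 2^{b̄_k}/((1−b̄_k)(4−b̄_k)); (ii) lim_{k→∞} ā_k·k^{1−b̄_k}/log k = (2/3)·e;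 (iii) there exists C > 0 such that for all integers k ≥ 2, 0 ≤ 1/ᾱ_k − (k+1)/2 ≤ C·log k. -/
/-- `b̄_k = (2 + 5 log(2/k) + √(9 (log(2/k))² + 4)) / (2 log(2/k))`. -/
noncomputable def bBar (k : ℕ) : ℝ :=
  (2 + 5 * Real.log (2 / k) + Real.sqrt (9 * (Real.log (2 / k)) ^ 2 + 4)) /
    (2 * Real.log (2 / k))

/-- `ā_k = 2^(b̄_k) / ((1 - b̄_k)(4 - b̄_k))`. -/
noncomputable def aBar (k : ℕ) : ℝ := (2 : ℝ) ^ (bBar k) / ((1 - bBar k) * (4 - bBar k))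

/-- `b̄_k` expressed with the positive quantity `l = log (k/2)`. -/
lemma bBar_eq (k : ℕ) :
    bBar k = (5 * Real.log (k / 2) - 2 - Real.sqrt (9 * Real.log (k / 2) ^ 2 + 4)) /
      (2 * Real.log (k / 2)) := by
  have h : Real.log (2 / (k : ℝ)) = -Real.log (k / 2) := by
    rw [← Real.log_inv, inv_div]
  unfold bBar
  rw [h, neg_sq, mul_neg, mul_neg, div_neg, ← neg_div]
  congr 1
  ring

lemma bBar_lt_one {k : ℕ} (hl : 0 < Real.log (k / 2)) : bBar k < 1 := by
  rw [bBar_eq]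
  set l := Real.log (k / 2)
  have hs : 3 * l < Real.sqrt (9 * l ^ 2 + 4) := Real.lt_sqrt_of_sq_lt (by nlinarith)
  rw [div_lt_one (by positivity)]
  linarith

lemma bBar_pos {k : ℕ} (hl : 5 / 4 < Real.log (k / 2)) : 0 < bBar k := by
  rw [bBar_eq]
  set l := Real.log (k / 2)
  have hs : Real.sqrt (9 * l ^ 2 + 4) < 5 * l - 2 := by
    rw [Real.sqrt_lt' (by linarith)]
    nlinarith
  apply div_pos <;> linarith

lemma bBar_stationary {k : ℕ} (hl : 0 < Real.log (k / 2)) :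
    Real.log (k / 2) * ((1 - bBar k) * (4 - bBar k)) = 5 - 2 * bBar k := by
  rw [bBar_eq]
  set l := Real.log (k / 2)
  have hs : Real.sqrt (9 * l ^ 2 + 4) ^ 2 = 9 * l ^ 2 + 4 := Real.sq_sqrt (by positivity)
  set s := Real.sqrt (9 * l ^ 2 + 4)
  field_simp
  linear_combination hs

lemma log_half_bound {k : ℕ} (hk : 8 ≤ k) : 5 / 4 < Real.log ((k : ℝ) / 2) := by
  have hk' : (8 : ℝ) ≤ k := by exact_mod_cast hk
  have h4 : Real.log 4 = 2 * Real.log 2 := by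
    rw [show (4 : ℝ) = 2 ^ 2 by norm_num, Real.log_pow]
    norm_num
  have h1 : Real.log 4 ≤ Real.log ((k : ℝ) / 2) := Real.log_le_log (by norm_num) (by linarith)
  have := Real.log_two_gt_d9
  linarith

lemma two_div_rpow {k : ℕ} (hk : 0 < k) (b : ℝ) :
    (2 / (k : ℝ)) ^ b = Real.exp (-Real.log (k / 2) * b) := by
  have hk' : (0 : ℝ) < k := by exact_mod_cast hk
  rw [Real.rpow_def_of_pos (by positivity), ← Real.log_inv, inv_div]

/-- Strict minimality at an arbitrary stationary point `c < 1`, by the tangent-line inequality for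
`exp` at each linear factor. -/
lemma objective_lt {l b c : ℝ} (hb : b < 1) (hc : c < 1)
    (hst : l * ((1 - c) * (4 - c)) = 5 - 2 * c) (hne : b ≠ c) :
    Real.exp (-l * c) / ((1 - c) * (4 - c)) < Real.exp (-l * b) / ((1 - b) * (4 - b)) := by
  have hc1 : 0 < 1 - c := by linarith
  have hc4 : 0 < 4 - c := by linarith
  have hb1 : 0 < 1 - b := by linarith
  have hb4 : 0 < 4 - b := by linarith
  have hcb : c - b ≠ 0 := sub_ne_zero.mpr hne.symm
  have h1 : (1 - b) / (1 - c) < Real.exp ((c - b) / (1 - c)) := by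
    have := Real.add_one_lt_exp (div_ne_zero hcb hc1.ne')
    have e : (1 - b) / (1 - c) = (c - b) / (1 - c) + 1 := by field_simp; ring
    rwa [e]
  have h2 : (4 - b) / (4 - c) < Real.exp ((c - b) / (4 - c)) := by
    have := Real.add_one_lt_exp (div_ne_zero hcb hc4.ne')
    have e : (4 - b) / (4 - c) = (c - b) / (4 - c) + 1 := by field_simp; ring
    rwa [e]
  have h3 := mul_lt_mul'' h1 h2 (by positivity) (by positivity)
  have e : (c - b) / (1 - c) + (c - b) / (4 - c) = -l * b - -l * c := by
    field_simp
    linear_combination -(c - b) * hst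
  rw [← Real.exp_add, e, Real.exp_sub, div_mul_div_comm,
    div_lt_div_iff₀ (by positivity) (Real.exp_pos _)] at h3
  rw [div_lt_div_iff₀ (by positivity) (by positivity)]
  linarith

lemma bBar_objective_lt {k : ℕ} (hk : 8 ≤ k) {b : ℝ} (hb : b < 1) (hne : b ≠ bBar k) :
    (2 / (k : ℝ)) ^ (bBar k) / ((1 - bBar k) * (4 - bBar k)) <
      (2 / (k : ℝ)) ^ b / ((1 - b) * (4 - b)) := by
  have hl : 0 < Real.log ((k : ℝ) / 2) := by linarith [log_half_bound hk]
  rw [two_div_rpow (by omega), two_div_rpow (by omega)]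
  exact objective_lt hb (bBar_lt_one hl) (bBar_stationary hl) hne

lemma bBar_objective_le {k : ℕ} (hk : 8 ≤ k) {b : ℝ} (hb : b < 1) :
    (2 / (k : ℝ)) ^ (bBar k) / ((1 - bBar k) * (4 - bBar k)) ≤
      (2 / (k : ℝ)) ^ b / ((1 - b) * (4 - b)) := by
  rcases eq_or_ne b (bBar k) with h | h
  · rw [h]
  · exact (bBar_objective_lt hk hb h).le

lemma pair_bound {k : ℕ} (hk : 8 ≤ k) {a b : ℝ} (hb1 : b < 1)
    (h : a * (1 - b) * (2 : ℝ) ^ (2 - b) - a * b * (1 - b) * (2 : ℝ) ^ (-b) - 1 ≥ 0) :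
    2 / ((1 + a * (k : ℝ) ^ (-b)) * k + 1) ≤
      2 / ((1 + aBar k * (k : ℝ) ^ (-(bBar k))) * k + 1) := by
  have hk0 : (0 : ℝ) < k := by
    have : 0 < k := by omega
    exact_mod_cast this
  have hl : 0 < Real.log ((k : ℝ) / 2) := by linarith [log_half_bound hk]
  have hc := bBar_lt_one hl
  have hmul : ∀ x : ℝ, (2 / (k : ℝ)) ^ x = (2 : ℝ) ^ x * (k : ℝ) ^ (-x) := by
    intro x
    rw [Real.div_rpow (by norm_num) hk0.le, Real.rpow_neg hk0.le, div_eq_mul_inv]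
  have h1 : 0 < 1 - b := by linarith
  have h4 : 0 < 4 - b := by linarith
  have ha : (2 : ℝ) ^ b / ((1 - b) * (4 - b)) ≤ a := by
    rw [Real.rpow_sub (by norm_num), Real.rpow_neg (by norm_num)] at h
    have hp : 0 < (2 : ℝ) ^ b := by positivity
    set p := (2 : ℝ) ^ b
    have e : a * (1 - b) * ((2 : ℝ) ^ (2 : ℝ) / p) - a * b * (1 - b) * p⁻¹ - 1
        = (a * ((1 - b) * (4 - b)) - p) / p := by
      norm_num
      field_simp
    rw [e] at h
    rw [div_le_iff₀ (by positivity)]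
    have := (le_div_iff₀ hp).mp h
    linarith
  have key : aBar k * (k : ℝ) ^ (-(bBar k)) ≤ a * (k : ℝ) ^ (-b) := by
    calc aBar k * (k : ℝ) ^ (-(bBar k))
        = (2 / (k : ℝ)) ^ (bBar k) / ((1 - bBar k) * (4 - bBar k)) := by
          rw [hmul, aBar]; ring
      _ ≤ (2 / (k : ℝ)) ^ b / ((1 - b) * (4 - b)) := bBar_objective_le hk hb1
      _ = (2 : ℝ) ^ b / ((1 - b) * (4 - b)) * (k : ℝ) ^ (-b) := by rw [hmul]; ring
      _ ≤ a * (k : ℝ) ^ (-b) := by gcongr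
  have hA : 0 < aBar k := by
    have h1 : 0 < 1 - bBar k := by linarith
    have h4 : 0 < 4 - bBar k := by linarith
    unfold aBar
    positivity
  gcongr

/-- Stationarity rewrites the quantity of the limit in terms of `l (1 - b̄)`, `b̄` and `l / log k`. -/
lemma aBar_growth_eq {k : ℕ} (hk : 8 ≤ k) :
    aBar k * (k : ℝ) ^ (1 - bBar k) / Real.log k =
      2 * Real.exp (Real.log (k / 2) * (1 - bBar k)) / (5 - 2 * bBar k) *
        (Real.log (k / 2) / Real.log k) := by
  have hk0 : (0 : ℝ) < k := by
    have : 0 < k := by omega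
    exact_mod_cast this
  have hl : 0 < Real.log ((k : ℝ) / 2) := by linarith [log_half_bound hk]
  have hc := bBar_lt_one hl
  have hp : (2 : ℝ) ^ bBar k * (k : ℝ) ^ (1 - bBar k)
      = 2 * Real.exp (Real.log (k / 2) * (1 - bBar k)) := by
    rw [← Real.rpow_def_of_pos (by positivity), Real.div_rpow hk0.le (by norm_num),
      Real.rpow_sub (x := 2) (by norm_num), Real.rpow_one]
    field_simp
  have h1 : 1 - bBar k ≠ 0 := by linarith
  have h4 : 4 - bBar k ≠ 0 := by linarith
  rw [← bBar_stationary hl, ← hp, aBar]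
  field_simp

lemma tendsto_log_half :
    Filter.Tendsto (fun k : ℕ => Real.log ((k : ℝ) / 2)) Filter.atTop Filter.atTop :=
  Real.tendsto_log_atTop.comp
    (tendsto_natCast_atTop_atTop.atTop_div_const (by norm_num : (0 : ℝ) < 2))

lemma tendsto_log_mul_one_sub_bBar :
    Filter.Tendsto (fun k : ℕ => Real.log ((k : ℝ) / 2) * (1 - bBar k))
      Filter.atTop (nhds 1) := by
  have hden : Filter.Tendsto (fun k : ℕ => Real.sqrt (9 * Real.log ((k : ℝ) / 2) ^ 2 + 4) +
      3 * Real.log ((k : ℝ) / 2)) Filter.atTop Filter.atTop := by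
    refine Filter.tendsto_atTop_mono' _ ?_ tendsto_log_half
    filter_upwards [tendsto_log_half.eventually_gt_atTop 0] with k hk
    have := Real.sqrt_nonneg (9 * Real.log ((k : ℝ) / 2) ^ 2 + 4)
    linarith
  have h := (hden.const_div_atTop 2).const_add 1
  rw [add_zero] at h
  refine h.congr' ?_
  filter_upwards [tendsto_log_half.eventually_gt_atTop 0] with k hk
  rw [bBar_eq]
  set l := Real.log ((k : ℝ) / 2)
  have hs : Real.sqrt (9 * l ^ 2 + 4) ^ 2 = 9 * l ^ 2 + 4 := Real.sq_sqrt (by positivity)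
  have hs0 : 0 ≤ Real.sqrt (9 * l ^ 2 + 4) := Real.sqrt_nonneg _
  set s := Real.sqrt (9 * l ^ 2 + 4)
  have : s + 3 * l ≠ 0 := by positivity
  field_simp
  linear_combination -hs

lemma tendsto_bBar : Filter.Tendsto bBar Filter.atTop (nhds 1) := by
  have h := (tendsto_log_mul_one_sub_bBar.div_atTop tendsto_log_half).const_sub 1
  rw [sub_zero] at h
  refine h.congr' ?_
  filter_upwards [tendsto_log_half.eventually_gt_atTop 0] with k hk
  field_simp
  ring

lemma tendsto_log_half_div_log :
    Filter.Tendsto (fun k : ℕ => Real.log ((k : ℝ) / 2) / Real.log k)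
      Filter.atTop (nhds 1) := by
  have hlog : Filter.Tendsto (fun k : ℕ => Real.log (k : ℝ)) Filter.atTop Filter.atTop :=
    Real.tendsto_log_atTop.comp tendsto_natCast_atTop_atTop
  have h := (hlog.const_div_atTop (Real.log 2)).const_sub 1
  rw [sub_zero] at h
  refine h.congr' ?_
  filter_upwards [hlog.eventually_gt_atTop 0, Filter.eventually_gt_atTop 0] with k hk hk0
  have hk0 : (k : ℝ) ≠ 0 := by exact_mod_cast hk0.ne'
  rw [Real.log_div hk0 (by norm_num)]
  field_simp

lemma tendsto_aBar_growth :
    Filter.Tendsto (fun k : ℕ => aBar k * (k : ℝ) ^ (1 - bBar k) / Real.log k)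
      Filter.atTop (nhds (2 / 3 * Real.exp 1)) := by
  have hexp := (Real.continuous_exp.tendsto 1).comp tendsto_log_mul_one_sub_bBar
  have h := ((hexp.const_mul 2).div ((tendsto_bBar.const_mul 2).const_sub 5)
    (by norm_num)).mul tendsto_log_half_div_log
  have e : 2 * Real.exp 1 / (5 - 2 * 1) * 1 = 2 / 3 * Real.exp 1 := by ring
  rw [e] at h
  refine h.congr' ?_
  filter_upwards [Filter.eventually_ge_atTop 8] with k hk
  exact (aBar_growth_eq hk).symm

lemma inv_alphaBar_succ (n : ℕ) :
    1 / alphaBar (n + 2) = (1 + Real.sqrt (1 + 4 * (1 / alphaBar (n + 1)) ^ 2)) / 2 := by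
  rw [alphaBar, one_div_div, one_div, inv_pow, div_eq_mul_inv 4]

/-- Indexed by `n = k - 1`, so that the induction starts at `ᾱ_1`. -/
lemma inv_alphaBar_bounds (n : ℕ) :
    ((n : ℝ) + 2) / 2 ≤ 1 / alphaBar (n + 1) ∧
      1 / alphaBar (n + 1) ≤ ((n : ℝ) + 2) / 2 + Real.log ((n : ℝ) + 1) := by
  induction n with
  | zero => simp [alphaBar]
  | succ n ih =>
    obtain ⟨hlo, hhi⟩ := ih
    rw [inv_alphaBar_succ]
    set t := 1 / alphaBar (n + 1)
    have hn : (0 : ℝ) ≤ n := n.cast_nonneg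
    have ht : 0 < t := by linarith
    have hs1 : 2 * t ≤ Real.sqrt (1 + 4 * t ^ 2) := Real.le_sqrt_of_sq_le (by nlinarith)
    have hs2 : Real.sqrt (1 + 4 * t ^ 2) ≤ 2 * t + 1 / (4 * t) := by
      rw [Real.sqrt_le_left (by positivity)]
      have e : (2 * t + 1 / (4 * t)) ^ 2 = 1 + 4 * t ^ 2 + (1 / (4 * t)) ^ 2 := by
        field_simp
        ring
      rw [e]
      linarith [sq_nonneg (1 / (4 * t))]
    have hst : 1 / (4 * t) ≤ 1 / ((n : ℝ) + 2) :=
      one_div_le_one_div_of_le (by positivity) (by linarith)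
    -- `1 / (n+2) ≤ log ((n+2)/(n+1))` is `1 - x⁻¹ ≤ log x`.
    have hlog : 1 / ((n : ℝ) + 2) ≤ Real.log ((n : ℝ) + 2) - Real.log ((n : ℝ) + 1) := by
      have h := Real.one_sub_inv_le_log_of_pos (x := ((n : ℝ) + 2) / (n + 1)) (by positivity)
      rw [Real.log_div (by positivity) (by positivity)] at h
      refine le_trans (le_of_eq ?_) h
      field_simp
      ring
    have hinv : 0 < 1 / ((n : ℝ) + 2) := by positivity
    push_cast
    rw [show (n : ℝ) + 1 + 1 = n + 2 by ring]
    constructor <;> linarith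

theorem stmt4 :
    (∀ k : ℕ, 8 ≤ k →
      (0 < bBar k ∧ bBar k < 1) ∧
      (∀ b : ℝ, 0 < b → b < 1 →
        (2 / (k : ℝ)) ^ (bBar k) / ((1 - bBar k) * (4 - bBar k)) ≤
          (2 / (k : ℝ)) ^ b / ((1 - b) * (4 - b))) ∧
      (∀ b : ℝ, 0 < b → b < 1 →
        (2 / (k : ℝ)) ^ b / ((1 - b) * (4 - b)) =
          (2 / (k : ℝ)) ^ (bBar k) / ((1 - bBar k) * (4 - bBar k)) → b = bBar k) ∧
      (∀ a b : ℝ, 0 < a → 0 < b → b < 1 →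
        a * (1 - b) * (2 : ℝ) ^ (2 - b) - a * b * (1 - b) * (2 : ℝ) ^ (-b) - 1 ≥ 0 →
        2 / ((1 + a * (k : ℝ) ^ (-b)) * k + 1) ≤
          2 / ((1 + aBar k * (k : ℝ) ^ (-(bBar k))) * k + 1))) ∧
    Filter.Tendsto (fun k : ℕ => aBar k * (k : ℝ) ^ (1 - bBar k) / Real.log k)
      Filter.atTop (nhds (2 / 3 * Real.exp 1)) ∧
    (∃ C : ℝ, 0 < C ∧ ∀ k : ℕ, 2 ≤ k →
      0 ≤ 1 / alphaBar k - ((k : ℝ) + 1) / 2 ∧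
      1 / alphaBar k - ((k : ℝ) + 1) / 2 ≤ C * Real.log k) := by
  refine ⟨fun k hk => ⟨⟨bBar_pos (log_half_bound hk), bBar_lt_one ?_⟩,
    fun b _ hb => bBar_objective_le hk hb, fun b _ hb h => ?_,
    fun a b _ _ hb h => pair_bound hk hb h⟩, tendsto_aBar_growth, 1, one_pos, fun k hk => ?_⟩
  · linarith [log_half_bound hk]
  · by_contra hne
    exact (bBar_objective_lt hk hb hne).ne' h
  · obtain ⟨n, rfl⟩ : ∃ n, k = n + 1 := ⟨k - 1, by omega⟩
    obtain ⟨h1, h2⟩ := inv_alphaBar_bounds n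
    push_cast
    constructor <;> linarith
end

section
/- Let N ≥ 1 be an integer and let (α_k)_{k=2}^N be reals with 0 < α_k < 1 for each k, and let Γ_k be built from (α_k). Then 0 < (Γ_N · Σ_{k=1}^N Γ_k^{-1})^{-1} ≤ (1/N) · Π_{k=2}^N (1 − α_k)^{−k/N}. -/
theorem prod_Gam_div (α : ℕ → ℝ) (n : ℕ) (h : ∀ k, 2 ≤ k → k ≤ n → 1 - α k ≠ 0) :
    ∏ k ∈ Finset.Icc 1 n, Gam α n / Gam α k = ∏ j ∈ Finset.Icc 2 n, (1 - α j) ^ (j - 1) := by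
  induction n with
  | zero => simp
  | succ n ih =>
    rcases Nat.eq_zero_or_pos n with rfl | hn
    · simp [Gam]
    have hG : Gam α (n + 1) = Gam α n * (1 - α (n + 1)) := by
      unfold Gam
      rw [Finset.prod_Icc_succ_top (by omega)]
    have hne : Gam α (n + 1) ≠ 0 := by
      unfold Gam
      refine Finset.prod_ne_zero_iff.2 fun k hk => ?_
      rw [Finset.mem_Icc] at hk
      exact h k hk.1 hk.2
    rw [Finset.prod_Icc_succ_top (by omega), Finset.prod_Icc_succ_top (by omega), div_self hne,
      mul_one, ← ih fun k h1 h2 => h k h1 (by omega), hG]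
    simp_rw [mul_div_right_comm]
    rw [Finset.prod_mul_distrib, Finset.prod_const]
    simp

theorem stmt7 (N : ℕ) (hN : 1 ≤ N) (α : ℕ → ℝ)
    (hα : ∀ k, 2 ≤ k → k ≤ N → 0 < α k ∧ α k < 1) :
    0 < (Gam α N * ∑ k ∈ Finset.Icc 1 N, (Gam α k)⁻¹)⁻¹ ∧
    (Gam α N * ∑ k ∈ Finset.Icc 1 N, (Gam α k)⁻¹)⁻¹ ≤
      (1 / N) * ∏ k ∈ Finset.Icc 2 N, (1 - α k) ^ (-((k : ℝ) / N)) := by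
  have hb : ∀ k ∈ Finset.Icc 2 N, 0 < 1 - α k ∧ 1 - α k < 1 := by
    intro k hk
    rw [Finset.mem_Icc] at hk
    have := hα k hk.1 hk.2
    constructor <;> linarith
  have hNpos : (0 : ℝ) < N := by exact_mod_cast hN
  have hG : ∀ k ≤ N, 0 < Gam α k := fun k hk =>
    Finset.prod_pos fun j hj => (hb j (Finset.Icc_subset_Icc_right hk hj)).1
  have hsum : 0 < ∑ k ∈ Finset.Icc 1 N, (Gam α k)⁻¹ :=
    Finset.sum_pos (fun k hk => inv_pos.2 (hG k (Finset.mem_Icc.1 hk).2)) ⟨1, by simp [hN]⟩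
  have hA := mul_pos (hG N le_rfl) hsum
  refine ⟨inv_pos.2 hA, ?_⟩
  have amgm := Real.geom_mean_le_arith_mean (Finset.Icc 1 N) (fun _ => 1)
    (fun k => Gam α N / Gam α k) (by simp) (by simpa using hNpos)
    (fun k hk => (div_pos (hG N le_rfl) (hG k (Finset.mem_Icc.1 hk).2)).le)
  simp only [Real.rpow_one, one_mul, Finset.sum_const, Nat.card_Icc, Nat.add_sub_cancel,
    nsmul_eq_mul, mul_one] at amgm
  rw [prod_Gam_div α N fun k h1 h2 => (hb k (Finset.mem_Icc.2 ⟨h1, h2⟩)).1.ne'] at amgm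
  simp_rw [div_eq_mul_inv (Gam α N)] at amgm
  rw [← Finset.mul_sum] at amgm
  have hpow : ∏ k ∈ Finset.Icc 2 N, (1 - α k) ^ k ≤
      ∏ k ∈ Finset.Icc 2 N, (1 - α k) ^ (k - 1) :=
    Finset.prod_le_prod (fun k hk => (pow_pos (hb k hk).1 _).le) fun k hk =>
      pow_le_pow_of_le_one (hb k hk).1.le (hb k hk).2.le (Nat.sub_le _ _)
  have hP : 0 < ∏ k ∈ Finset.Icc 2 N, (1 - α k) ^ k :=
    Finset.prod_pos fun k hk => pow_pos (hb k hk).1 _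
  have hQ : 0 < (∏ k ∈ Finset.Icc 2 N, (1 - α k) ^ k) ^ (N : ℝ)⁻¹ := Real.rpow_pos_of_pos hP _
  have hle := (Real.rpow_le_rpow hP.le hpow (inv_pos.2 hNpos).le).trans amgm
  have hprod : ∏ k ∈ Finset.Icc 2 N, (1 - α k) ^ (-((k : ℝ) / N)) =
      ((∏ k ∈ Finset.Icc 2 N, (1 - α k) ^ k) ^ (N : ℝ)⁻¹)⁻¹ := by
    rw [← Real.finsetProd_rpow _ _ fun k hk => (pow_pos (hb k hk).1 _).le,
      ← Finset.prod_inv_distrib]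
    refine Finset.prod_congr rfl fun k hk => ?_
    rw [Real.rpow_neg (hb k hk).1.le, ← Real.rpow_natCast, ← Real.rpow_mul (hb k hk).1.le,
      div_eq_mul_inv]
  rw [hprod, one_div, ← mul_inv]
  refine inv_anti₀ (mul_pos hNpos hQ) ?_
  rwa [le_div_iff₀' hNpos] at hle
end

section
/- Let ω > 0, α > 0 and d > 0 be reals. Then the function δ ↦ min{ ω/δ, α·δ/(α·δ + d) } on (0, ∞) attains a strict global maximum at the unique point δ* = (ω + √(ω² + 4ωd/α))/2, and its maximum value there equals 2/(1 + √(1 + 4d/(αω))). -/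
/-!
On `(0, ∞)` the function `δ ↦ ω / δ` is strictly decreasing and `δ ↦ α δ / (α δ + d)` is strictly
increasing, so their minimum has a strict global maximum wherever the two graphs cross. The crossing
equation is the quadratic `α δ² = ω (α δ + d)`, whose positive root is `δ*`. The value there is
`ω / δ*`, rewritten using `√(ω² + 4ωd/α) = ω √(1 + 4d/(αω))`.
-/

theorem stmt8 (ω α d : ℝ) (hω : 0 < ω) (hα : 0 < α) (hd : 0 < d) :
    (∀ δ : ℝ, 0 < δ → δ ≠ (ω + Real.sqrt (ω ^ 2 + 4 * ω * d / α)) / 2 →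
      min (ω / δ) (α * δ / (α * δ + d)) <
        min (ω / ((ω + Real.sqrt (ω ^ 2 + 4 * ω * d / α)) / 2))
          (α * ((ω + Real.sqrt (ω ^ 2 + 4 * ω * d / α)) / 2) /
            (α * ((ω + Real.sqrt (ω ^ 2 + 4 * ω * d / α)) / 2) + d))) ∧
    min (ω / ((ω + Real.sqrt (ω ^ 2 + 4 * ω * d / α)) / 2))
        (α * ((ω + Real.sqrt (ω ^ 2 + 4 * ω * d / α)) / 2) /
          (α * ((ω + Real.sqrt (ω ^ 2 + 4 * ω * d / α)) / 2) + d)) =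
      2 / (1 + Real.sqrt (1 + 4 * d / (α * ω))) := by
  have hsqrt : Real.sqrt (ω ^ 2 + 4 * ω * d / α) = ω * Real.sqrt (1 + 4 * d / (α * ω)) := by
    rw [show ω ^ 2 + 4 * ω * d / α = ω ^ 2 * (1 + 4 * d / (α * ω)) by field_simp,
      Real.sqrt_mul (sq_nonneg ω), Real.sqrt_sq hω.le]
  have hs0 : 0 ≤ Real.sqrt (1 + 4 * d / (α * ω)) := Real.sqrt_nonneg _
  have hs2 : Real.sqrt (1 + 4 * d / (α * ω)) ^ 2 = 1 + 4 * d / (α * ω) :=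
    Real.sq_sqrt (by positivity)
  rw [hsqrt]
  generalize Real.sqrt (1 + 4 * d / (α * ω)) = s at hs0 hs2 ⊢
  have hval : ω / ((ω + ω * s) / 2) = 2 / (1 + s) := by
    field_simp
  have hpos : 0 < (ω + ω * s) / 2 := by positivity
  have hquad : α * ((ω + ω * s) / 2) ^ 2 = ω * (α * ((ω + ω * s) / 2) + d) := by
    have hs2' : α * ω * s ^ 2 = α * ω + 4 * d := by
      rw [hs2]
      field_simp
    linear_combination ω / 4 * hs2'
  rw [← hval]
  generalize (ω + ω * s) / 2 = t at hpos hquad ⊢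
  have hcross : α * t / (α * t + d) = ω / t := by
    rw [div_eq_div_iff (by positivity) hpos.ne']
    linear_combination hquad
  rw [hcross, min_self]
  refine ⟨fun δ hδ hne => ?_, rfl⟩
  rcases lt_or_gt_of_ne hne with h | h
  · refine min_lt_of_right_lt ?_
    rw [← hcross, div_lt_div_iff₀ (by positivity) (by positivity)]
    nlinarith [mul_lt_mul_of_pos_left h (mul_pos hα hd)]
  · exact min_lt_of_left_lt (div_lt_div_of_pos_left hω hpos h)
end

section
/- Let n ≥ 1 be an integer, let q be a real with 1 < q < 1 + 2/n, set γ := 2/(q−1) − n (> 0), and let Σ be a symmetric positive definite real n×n matrix. Then the second q-moment identity holds: for all indices i, j ∈ {1, …, n}, ∫_{ℝⁿ} x_i x_j · (γ + ⟨x, Σ^{-1} x⟩)^{q/(1−q)} dx = Σ_{ij} · ∫_{ℝⁿ} (γ + ⟨x, Σ^{-1} x⟩)^{q/(1−q)} dx, where both integrals are finite. -/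
/-!
Write `m = 1 / (q - 1)`, so the exponent is `-(m + 1)` and `γ = 2 * m - n > 0`. Factoring
`S = B * Bᵀ` and substituting `x = B y` turns the quadratic form into `‖y‖ ^ 2`
(`exists_integral_comp_mulVec`, `quadForm_mulVec`), and `x i * x j` into a combination of products
`y k * y l`, so the claim reduces to `S = 1`. There, reflections and permutations of the coordinates
show that the moment matrix is a multiple of the identity (`integral_coord_mul_coord`), and its
trace is computed in polar coordinates (`integral_radial_eq_zero`) from
`d/dr (r ^ n * (γ + r ^ 2) ^ (-m)) = γ * r ^ (n - 1) * (n - r ^ 2) * (γ + r ^ 2) ^ (-(m + 1))`.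
Integrability follows from `2 * m > n`, since every integrand is `O((γ + ‖y‖ ^ 2) ^ (-m))`.
-/

open MeasureTheory Matrix
open Filter Topology

lemma integrable_rpow_neg {n : ℕ} {m γ : ℝ} (hγ : 0 < γ) (hm : (n : ℝ) < 2 * m) :
    Integrable (fun y : EuclideanSpace ℝ (Fin n) => (γ + ‖y‖ ^ 2) ^ (-m)) := by
  have hm0 : 0 < m := by have := n.cast_nonneg (α := ℝ); linarith
  have h := integrable_rpow_neg_one_add_norm_sq (E := EuclideanSpace ℝ (Fin n)) (μ := volume)
    (r := 2 * m) (by simpa using hm)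
  have hc : 0 < min γ 1 := by positivity
  refine (h.const_mul ((min γ 1) ^ (-m))).mono' ?_ (Eventually.of_forall fun y => ?_)
  · exact (by fun_prop : Measurable fun y : EuclideanSpace ℝ (Fin n) =>
      (γ + ‖y‖ ^ 2) ^ (-m)).aestronglyMeasurable
  · rw [Real.norm_of_nonneg (by positivity), show -(2 * m) / 2 = -m by ring,
      ← Real.mul_rpow hc.le (by positivity)]
    apply Real.rpow_le_rpow_of_nonpos (by positivity) _ (by linarith)
    have h1 := min_le_left γ 1
    have h2 := min_le_right γ 1
    nlinarith [sq_nonneg ‖y‖]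

/-- A factor of at most quadratic growth costs one power of `γ + ‖y‖ ^ 2`, so `2 * m > n` still
suffices for integrability against the exponent `-(m + 1)`. -/
lemma integrable_mul_of_abs_le {n : ℕ} {m γ : ℝ} (hγ : 0 < γ) (hm : (n : ℝ) < 2 * m)
    {g : EuclideanSpace ℝ (Fin n) → ℝ}
    (hg : Measurable g) {C : ℝ} (hb : ∀ y, |g y| ≤ C * (γ + ‖y‖ ^ 2)) :
    Integrable (fun y : EuclideanSpace ℝ (Fin n) => g y * (γ + ‖y‖ ^ 2) ^ (-(m + 1))) := by
  refine ((integrable_rpow_neg hγ hm).const_mul C).mono' ?_ (Eventually.of_forall fun y => ?_)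
  · exact (by fun_prop : Measurable fun y : EuclideanSpace ℝ (Fin n) =>
      g y * (γ + ‖y‖ ^ 2) ^ (-(m + 1))).aestronglyMeasurable
  · have hp : 0 < γ + ‖y‖ ^ 2 := by positivity
    rw [norm_mul, Real.norm_eq_abs, Real.norm_of_nonneg (by positivity),
      show -m = 1 + -(m + 1) by ring, Real.rpow_add hp, Real.rpow_one, ← mul_assoc]
    gcongr
    exact hb y

lemma integrable_weight {n : ℕ} {m γ : ℝ} (hγ : 0 < γ) (hm : (n : ℝ) < 2 * m) :
    Integrable (fun y : EuclideanSpace ℝ (Fin n) => (γ + ‖y‖ ^ 2) ^ (-(m + 1))) := by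
  simpa using integrable_mul_of_abs_le hγ hm (g := fun _ => 1) measurable_const (C := γ⁻¹) fun y => by
    rw [abs_one, mul_add, inv_mul_cancel₀ hγ.ne']
    have : 0 ≤ γ⁻¹ * ‖y‖ ^ 2 := by positivity
    linarith

lemma integrable_coord {n : ℕ} {m γ : ℝ} (hγ : 0 < γ) (hm : (n : ℝ) < 2 * m) (i j : Fin n) :
    Integrable (fun y : EuclideanSpace ℝ (Fin n) => y i * y j * (γ + ‖y‖ ^ 2) ^ (-(m + 1))) := by
  refine integrable_mul_of_abs_le hγ hm (by fun_prop) (C := 1) fun y => ?_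
  have hi : |y i| ≤ ‖y‖ := PiLp.norm_apply_le y i
  have hj : |y j| ≤ ‖y‖ := PiLp.norm_apply_le y j
  rw [abs_mul]
  nlinarith [mul_le_mul hi hj (abs_nonneg _) (norm_nonneg _)]

/-- In polar coordinates the radial integrand is the derivative of
`γ⁻¹ * r ^ n * (γ + r ^ 2) ^ (-m)`, which vanishes at `0` and at infinity. This is where the value
`γ = 2 * m - n` enters. -/
lemma integral_radial_eq_zero {n : ℕ} (hn : 1 ≤ n) {m γ : ℝ} (hγ : 0 < γ) (hm : γ = 2 * m - n) :
    ∫ y : EuclideanSpace ℝ (Fin n), (n - ‖y‖ ^ 2) * (γ + ‖y‖ ^ 2) ^ (-(m + 1)) = 0 := by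
  have hm' : (n : ℝ) < 2 * m := by linarith
  have hm0 : 0 < m := by have := n.cast_nonneg (α := ℝ); linarith
  obtain ⟨k, rfl⟩ : ∃ k, n = k + 1 := ⟨n - 1, by omega⟩
  have hint : Integrable fun y : EuclideanSpace ℝ (Fin (k + 1)) =>
      (((k + 1 : ℕ) : ℝ) - ‖y‖ ^ 2) * (γ + ‖y‖ ^ 2) ^ (-(m + 1)) := by
    refine integrable_mul_of_abs_le hγ hm' (by fun_prop) (C := (k + 1 : ℕ) / γ + 1) fun y => ?_
    have h1 : ((k + 1 : ℕ) / γ) * γ = (k + 1 : ℕ) := by field_simp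
    have h2 : 0 ≤ ((k + 1 : ℕ) / γ) * ‖y‖ ^ 2 := by positivity
    have h3 : (0:ℝ) ≤ (k + 1 : ℕ) := by positivity
    have h4 := sq_nonneg ‖y‖
    rw [abs_le]
    constructor <;> nlinarith
  have hI := (integrable_fun_norm_addHaar (E := EuclideanSpace ℝ (Fin (k + 1))) volume
    (f := fun r : ℝ => (((k + 1 : ℕ) : ℝ) - r ^ 2) * (γ + r ^ 2) ^ (-(m + 1)))).1 hint
  rw [integral_fun_norm_addHaar (E := EuclideanSpace ℝ (Fin (k + 1))) volume
    (fun r : ℝ => (((k + 1 : ℕ) : ℝ) - r ^ 2) * (γ + r ^ 2) ^ (-(m + 1)))]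
  have hderiv : ∀ r ∈ Set.Ici (0:ℝ),
      HasDerivAt (fun r : ℝ => γ⁻¹ * (r ^ (k + 1) * (γ + r ^ 2) ^ (-m)))
      (r ^ (Module.finrank ℝ (EuclideanSpace ℝ (Fin (k + 1))) - 1) •
        ((((k + 1 : ℕ) : ℝ) - r ^ 2) * (γ + r ^ 2) ^ (-(m + 1)))) r := by
    intro r _
    have hp : 0 < γ + r ^ 2 := by positivity
    have h1 : HasDerivAt (fun r : ℝ => γ + r ^ 2) (2 * r) r := by
      simpa using (hasDerivAt_pow 2 r).const_add γ
    have h2 := ((hasDerivAt_pow (k + 1) r).mul (h1.rpow_const (p := -m) (.inl hp.ne'))).const_mul γ⁻¹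
    refine h2.congr_deriv ?_
    rw [show -m - 1 = -(m + 1) by ring, show -m = 1 + -(m + 1) by ring, Real.rpow_add hp,
      Real.rpow_one]
    simp only [finrank_euclideanSpace_fin, Nat.add_sub_cancel, smul_eq_mul]
    have hmm : m = (γ + (k + 1 : ℕ)) / 2 := by linarith
    generalize (γ + r ^ 2) ^ (-(m + 1)) = w
    rw [hmm]
    push_cast
    field_simp
    ring
  have hlim : Tendsto (fun r : ℝ => γ⁻¹ * (r ^ (k + 1) * (γ + r ^ 2) ^ (-m))) atTop (𝓝 0) := by
    have h0 := (tendsto_rpow_neg_atTop hγ).const_mul γ⁻¹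
    rw [mul_zero] at h0
    refine squeeze_zero' ?_ ?_ h0
    · filter_upwards [eventually_gt_atTop 0] with r hr
      positivity
    -- Dropping `γ` from the base bounds the antiderivative by a multiple of
    -- `r ^ (n - 2 * m) = r ^ (-γ)`.
    · filter_upwards [eventually_gt_atTop 0] with r hr
      gcongr
      calc r ^ (k + 1) * (γ + r ^ 2) ^ (-m) ≤ r ^ (k + 1) * (r ^ 2) ^ (-m) := by
            gcongr ?_ * ?_
            exact Real.rpow_le_rpow_of_nonpos (by positivity) (by linarith) (by linarith)
        _ = r ^ (-γ) := by
            rw [← Real.rpow_natCast r (k + 1), ← Real.rpow_natCast r 2, ← Real.rpow_mul hr.le,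
              ← Real.rpow_add hr]
            congr 1
            rw [hm]; push_cast; ring
  rw [integral_Ioi_of_hasDerivAt_of_tendsto' hderiv hI hlim]
  simp

/-- The case of the identity matrix: off-diagonal moments vanish by a coordinate reflection, and the
diagonal ones agree by coordinate swaps, so `integral_radial_eq_zero` determines them. -/
lemma integral_coord_mul_coord {n : ℕ} (hn : 1 ≤ n) {m γ : ℝ} (hγ : 0 < γ) (hm : γ = 2 * m - n)
    (i j : Fin n) :
    ∫ y : EuclideanSpace ℝ (Fin n), y i * y j * (γ + ‖y‖ ^ 2) ^ (-(m + 1)) =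
      (if i = j then 1 else 0) * ∫ y : EuclideanSpace ℝ (Fin n), (γ + ‖y‖ ^ 2) ^ (-(m + 1)) := by
  have hm' : (n : ℝ) < 2 * m := by linarith
  split_ifs with h
  · subst h
    have key : ∀ k : Fin n,
        ∫ y : EuclideanSpace ℝ (Fin n), y k * y k * (γ + ‖y‖ ^ 2) ^ (-(m + 1)) =
        ∫ y : EuclideanSpace ℝ (Fin n), y i * y i * (γ + ‖y‖ ^ 2) ^ (-(m + 1)) := by
      intro k
      let e := LinearIsometryEquiv.piLpCongrLeft 2 ℝ ℝ (Equiv.swap i k)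
      rw [← e.measurePreserving.integral_comp e.toHomeomorph.measurableEmbedding]
      congr 1
      ext y
      simp [e, LinearIsometryEquiv.piLpCongrLeft_apply, Equiv.piCongrLeft']
    have hsum : ∑ k, ∫ y : EuclideanSpace ℝ (Fin n), y k * y k * (γ + ‖y‖ ^ 2) ^ (-(m + 1)) =
        ∫ y : EuclideanSpace ℝ (Fin n), ‖y‖ ^ 2 * (γ + ‖y‖ ^ 2) ^ (-(m + 1)) := by
      rw [← integral_finsetSum _ fun k _ => integrable_coord hγ hm' k k]
      congr 1
      ext y
      rw [← Finset.sum_mul, EuclideanSpace.real_norm_sq_eq]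
      simp only [sq]
    have hr := integral_radial_eq_zero hn hγ hm
    have h2 : Integrable fun y : EuclideanSpace ℝ (Fin n) => ‖y‖ ^ 2 * (γ + ‖y‖ ^ 2) ^ (-(m + 1)) :=
      integrable_mul_of_abs_le hγ hm' (by fun_prop) (C := 1) fun y => by
        rw [abs_of_nonneg (by positivity)]; linarith
    simp only [sub_mul] at hr
    rw [integral_sub ((integrable_weight hγ hm').const_mul _) h2, integral_const_mul, ← hsum,
      Finset.sum_congr rfl fun k _ => key k, Finset.sum_const, Finset.card_univ, Fintype.card_fin,
      nsmul_eq_mul, ← mul_sub] at hr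
    have hn0 : (n : ℝ) ≠ 0 := by positivity
    have := (mul_eq_zero.1 hr).resolve_left hn0
    linarith
  · let e : (EuclideanSpace ℝ (Fin n)) ≃ₗᵢ[ℝ] (EuclideanSpace ℝ (Fin n)) :=
      LinearIsometryEquiv.piLpCongrRight 2
      (fun k => if k = i then LinearIsometryEquiv.neg ℝ else LinearIsometryEquiv.refl ℝ ℝ)
    have hneg := e.measurePreserving.integral_comp e.toHomeomorph.measurableEmbedding
      fun y : EuclideanSpace ℝ (Fin n) => y i * y j * (γ + ‖y‖ ^ 2) ^ (-(m + 1))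
    have hi : ∀ y, (e y) i = - y i := fun y => by
      simp [e, LinearIsometryEquiv.piLpCongrRight_apply]
    have hj : ∀ y, (e y) j = y j := fun y => by
      simp [e, LinearIsometryEquiv.piLpCongrRight_apply, Ne.symm h]
    simp only [hi, hj, LinearIsometryEquiv.norm_map, neg_mul, integral_neg] at hneg
    linarith

/-- Transport of integrability and integrals along an invertible linear map; the Jacobian is left as
an unspecified positive constant because it cancels in the moment identity. -/
lemma exists_integral_comp_mulVec {n : ℕ} {B : Matrix (Fin n) (Fin n) ℝ} (hB : B.det ≠ 0) :
    ∃ c : ℝ, 0 < c ∧ ∀ f : (Fin n → ℝ) → ℝ,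
      (Integrable f ↔ Integrable fun y : EuclideanSpace ℝ (Fin n) => f (B *ᵥ y.ofLp)) ∧
      c * ∫ x, f x = ∫ y : EuclideanSpace ℝ (Fin n), f (B *ᵥ y.ofLp) := by
  have hc : 0 < |B.det⁻¹| := abs_pos.2 (inv_ne_zero hB)
  have hmap := Real.map_matrix_volume_pi_eq_smul_volume_pi hB
  have hlin : MeasurableEmbedding (toLin' B) := by
    let e := (LinearEquiv.ofIsUnitDet (f := toLin' B) (v := Pi.basisFun ℝ (Fin n))
      (v' := Pi.basisFun ℝ (Fin n)) (by simpa [← toLin'_apply'] using hB))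
    exact e.toContinuousLinearEquiv.toHomeomorph.measurableEmbedding
  have hofLp : MeasurableEmbedding (WithLp.ofLp (p := 2) (V := Fin n → ℝ)) :=
    (MeasurableEquiv.toLp 2 (Fin n → ℝ)).symm.measurableEmbedding
  refine ⟨|B.det⁻¹|, hc, fun f => ⟨?_, ?_⟩⟩
  · rw [← integrable_smul_measure (c := ENNReal.ofReal |B.det⁻¹|) (by simpa using hB)
      ENNReal.ofReal_ne_top, ← hmap, hlin.integrable_map_iff,
      ← (PiLp.volume_preserving_ofLp (Fin n)).integrable_comp_emb hofLp]
    rfl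
  · have h := integral_smul_measure (μ := volume) f (ENNReal.ofReal |B.det⁻¹|)
    rw [ENNReal.toReal_ofReal hc.le, ← hmap, hlin.integral_map,
      ← (PiLp.volume_preserving_ofLp (Fin n)).integral_comp hofLp] at h
    exact h.symm

open scoped MatrixOrder in
lemma Matrix.PosDef.exists_eq_mul_transpose {n : ℕ} {S : Matrix (Fin n) (Fin n) ℝ}
    (hS : S.PosDef) : ∃ B : Matrix (Fin n) (Fin n) ℝ, B.det ≠ 0 ∧ S = B * Bᵀ := by
  obtain ⟨b, hb, rfl⟩ :=
    CStarAlgebra.isStrictlyPositive_iff_eq_star_mul_self.1 hS.isStrictlyPositive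
  refine ⟨bᵀ, ?_, ?_⟩
  · rw [det_transpose]
    exact ((isUnit_iff_isUnit_det b).1 hb).ne_zero
  · rw [star_eq_conjTranspose, conjTranspose_eq_transpose_of_trivial, transpose_transpose]

lemma quadForm_mulVec {n : ℕ} {B : Matrix (Fin n) (Fin n) ℝ} (hB : B.det ≠ 0)
    (y : EuclideanSpace ℝ (Fin n)) :
    (B *ᵥ y.ofLp) ⬝ᵥ ((B * Bᵀ)⁻¹ *ᵥ (B *ᵥ y.ofLp)) = ‖y‖ ^ 2 := by
  have hu : IsUnit B.det := hB.isUnit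
  rw [Matrix.mul_inv_rev, mulVec_mulVec, Matrix.mul_assoc, nonsing_inv_mul _ hu, Matrix.mul_one,
    dotProduct_mulVec, ← mulVec_transpose, transpose_nonsing_inv, transpose_transpose,
    mulVec_mulVec, nonsing_inv_mul _ hu, one_mulVec, EuclideanSpace.real_norm_sq_eq]
  simp only [dotProduct, sq]

theorem stmt10 (n : ℕ) (hn : 1 ≤ n) (q : ℝ) (hq1 : 1 < q) (hq2 : q < 1 + 2 / n)
    (S : Matrix (Fin n) (Fin n) ℝ) (hS : S.PosDef) (i j : Fin n) :
    Integrable (fun x : Fin n → ℝ =>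
      x i * x j * ((2 / (q - 1) - n) + x ⬝ᵥ (S⁻¹ *ᵥ x)) ^ (q / (1 - q))) volume ∧
    Integrable (fun x : Fin n → ℝ =>
      ((2 / (q - 1) - n) + x ⬝ᵥ (S⁻¹ *ᵥ x)) ^ (q / (1 - q))) volume ∧
    (∫ x : Fin n → ℝ,
        x i * x j * ((2 / (q - 1) - n) + x ⬝ᵥ (S⁻¹ *ᵥ x)) ^ (q / (1 - q)) ∂volume) =
      S i j *
        ∫ x : Fin n → ℝ, ((2 / (q - 1) - n) + x ⬝ᵥ (S⁻¹ *ᵥ x)) ^ (q / (1 - q)) ∂volume := by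
  have hn0 : (0 : ℝ) < n := by exact_mod_cast hn
  have hq0 : 0 < q - 1 := by linarith
  obtain ⟨m, hmdef⟩ : ∃ m, m = 1 / (q - 1) := ⟨_, rfl⟩
  have hexp : q / (1 - q) = -(m + 1) := by
    have h1q : (1 - q) ≠ 0 := by linarith
    rw [hmdef]
    field_simp
    ring
  have hγm : 2 / (q - 1) - n = 2 * m - n := by rw [hmdef]; ring
  have hγ : 0 < 2 / (q - 1) - (n : ℝ) := by
    rw [sub_pos, lt_div_iff₀ hq0, mul_comm, ← lt_div_iff₀ hn0]
    linarith
  rw [hexp]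
  generalize 2 / (q - 1) - (n : ℝ) = γ at hγ hγm
  have hm' : (n : ℝ) < 2 * m := by linarith
  obtain ⟨B, hB, rfl⟩ := hS.exists_eq_mul_transpose
  obtain ⟨c, hc, htr⟩ := exists_integral_comp_mulVec hB
  have hexpand : ∀ y : EuclideanSpace ℝ (Fin n),
      (B *ᵥ y.ofLp) i * (B *ᵥ y.ofLp) j * (γ + ‖y‖ ^ 2) ^ (-(m + 1)) =
        ∑ k, ∑ l, B i k * B j l * (y k * y l * (γ + ‖y‖ ^ 2) ^ (-(m + 1))) := by
    intro y
    simp only [mulVec, dotProduct, Finset.sum_mul, Finset.mul_sum]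
    rw [Finset.sum_comm]
    refine Finset.sum_congr rfl fun k _ => Finset.sum_congr rfl fun l _ => ?_
    ring
  have hint : ∀ k l, Integrable fun y : EuclideanSpace ℝ (Fin n) =>
      B i k * B j l * (y k * y l * (γ + ‖y‖ ^ 2) ^ (-(m + 1))) :=
    fun k l => (integrable_coord hγ hm' k l).const_mul _
  refine ⟨?_, ?_, ?_⟩
  · rw [(htr _).1]
    simp only [quadForm_mulVec hB, hexpand]
    exact integrable_finsetSum _ fun k _ => integrable_finsetSum _ fun l _ => hint k l
  · rw [(htr _).1]
    simp only [quadForm_mulVec hB]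
    exact integrable_weight hγ hm'
  · apply mul_left_cancel₀ hc.ne'
    rw [(htr _).2, mul_left_comm, (htr _).2]
    simp only [quadForm_mulVec hB, hexpand]
    rw [integral_finsetSum _ fun k _ => integrable_finsetSum _ fun l _ => hint k l]
    simp only [integral_finsetSum _ fun l _ => hint _ l, integral_const_mul,
      integral_coord_mul_coord hn hγ hγm]
    simp [mul_apply, Finset.sum_mul]
end

section
/- Let n ≥ 1 be an integer, let q be a real with 1 < q < 1 + 2/n, let Λ be a symmetric positive definite real n×n matrix, and define p(x) := det(πΛ)^{-1/2} · (Γ(1/(q−1)) / Γ(1/(q−1) − n/2)) · (1 + ⟨x, Λ^{-1} x⟩)^{1/(1−q)} for x ∈ ℝⁿ. Then ∫_{ℝⁿ} p(x)^q dx = det(πΛ)^{(1−q)/2} · [Γ(q/(q−1) − n/2) / Γ(1/(q−1) − n/2)^q] / [Γ(q/(q−1)) / Γ(1/(q−1))^q]. -/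
/-!
The integrand is a constant times `(1 + ⟨x, Λ⁻¹ x⟩) ^ (-a)` with `a = q / (q - 1)`, so everything
reduces to
`∫ (1 + ⟨x, Λ⁻¹ x⟩) ^ (-a) dx = √det(πΛ) · Γ(a - n/2) / Γ(a)` for `a > n/2`
(`integral_one_add_posDef_rpow`). Writing `Λ⁻¹ = Cᵀ C` and substituting `y = C x` leaves the case
`Λ = 1` (`integral_one_add_dotProduct_rpow`). There `Γ(a) (1 + |y|²) ^ (-a)` is expressed as
`∫₀^∞ t ^ (a - 1) exp(-(1 + |y|²) t) dt`; after exchanging the integrals, the one over `y` is a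
Gaussian, equal to `(π / t) ^ (n / 2) exp(-t)`, and the remaining one over `t` is `Γ(a - n/2)`.
-/

open MeasureTheory Matrix

lemma integral_gaussian_pi (n : ℕ) {t : ℝ} (ht : 0 < t) :
    ∫ y : Fin n → ℝ, Real.exp (-((1 + y ⬝ᵥ y) * t)) =
      Real.pi ^ ((n : ℝ) / 2) * (t ^ (-((n : ℝ) / 2)) * Real.exp (-t)) := by
  have h : ∀ y : Fin n → ℝ, Real.exp (-((1 + y ⬝ᵥ y) * t)) =
      Real.exp (-t) * ∏ i, Real.exp (-t * y i ^ 2) := by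
    intro y
    rw [← Real.exp_sum, ← Real.exp_add, ← Finset.mul_sum]
    congr 1
    simp only [dotProduct, pow_two]
    ring
  simp_rw [h]
  rw [integral_const_mul, integral_fintype_prod_volume_eq_pow (fun x : ℝ => Real.exp (-t * x ^ 2)),
    integral_gaussian, Fintype.card_fin, Real.sqrt_eq_rpow, ← Real.rpow_natCast,
    ← Real.rpow_mul (by positivity), Real.div_rpow (by positivity) ht.le, Real.rpow_neg ht.le]
  rw [one_div_mul_eq_div]
  ring

lemma integrable_gaussian_pi (n : ℕ) {t : ℝ} (ht : 0 < t) :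
    Integrable (fun y : Fin n → ℝ => Real.exp (-((1 + y ⬝ᵥ y) * t))) := by
  -- the integral of a non-integrable function is the junk value 0, but this one is positive
  by_contra h
  have h1 := integral_gaussian_pi n ht
  rw [integral_undef h] at h1
  have : 0 < Real.pi ^ ((n : ℝ) / 2) * (t ^ (-((n : ℝ) / 2)) * Real.exp (-t)) := by positivity
  linarith

/-- The standard case `Λ = 1`: apply Tonelli to
`Γ(a) (1 + |y|²)^(-a) = ∫₀^∞ t^(a-1) exp(-(1 + |y|²) t) dt`. -/
lemma integral_one_add_dotProduct_rpow (n : ℕ) {a : ℝ} (ha : (n : ℝ) / 2 < a) :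
    ∫ y : Fin n → ℝ, (1 + y ⬝ᵥ y) ^ (-a) =
      Real.pi ^ ((n : ℝ) / 2) * Real.Gamma (a - n / 2) / Real.Gamma a := by
  have ha0 : 0 < a := lt_of_le_of_lt (by positivity) ha
  have hy : ∀ y : Fin n → ℝ, 0 ≤ y ⬝ᵥ y := fun y =>
    Finset.sum_nonneg fun i _ => mul_self_nonneg _
  let f : (Fin n → ℝ) → ℝ → ℝ := fun y t => t ^ (a - 1) * Real.exp (-((1 + y ⬝ᵥ y) * t))
  have hin : ∀ y, ∫ t in Set.Ioi 0, f y t = (1 + y ⬝ᵥ y) ^ (-a) * Real.Gamma a := by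
    intro y
    have := hy y
    rw [Real.integral_rpow_mul_exp_neg_mul_Ioi ha0 (by linarith), one_div,
      Real.inv_rpow (by linarith), Real.rpow_neg (by linarith)]
  have hout : ∀ t ∈ Set.Ioi (0 : ℝ), ∫ y, f y t =
      Real.pi ^ ((n : ℝ) / 2) * (t ^ (a - n / 2 - 1) * Real.exp (-(1 * t))) := by
    intro t ht
    have ht : 0 < t := ht
    simp only [f]
    rw [integral_const_mul, integral_gaussian_pi n ht,
      show a - n / 2 - 1 = (a - 1) + (-((n : ℝ) / 2)) by ring, Real.rpow_add ht, one_mul]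
    ring
  have hG : ∫ t in Set.Ioi (0 : ℝ), t ^ (a - n / 2 - 1) * Real.exp (-(1 * t)) =
      Real.Gamma (a - n / 2) := by
    rw [Real.integral_rpow_mul_exp_neg_mul_Ioi (by linarith) one_pos]
    simp
  have hGi : Integrable (fun t : ℝ => t ^ (a - n / 2 - 1) * Real.exp (-(1 * t)))
      (volume.restrict (Set.Ioi 0)) := by
    by_contra h
    rw [integral_undef h] at hG
    exact (Real.Gamma_pos_of_pos (by linarith : 0 < a - n / 2)).ne hG
  have hint : Integrable (Function.uncurry f) (volume.prod (volume.restrict (Set.Ioi 0))) := by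
    have hm : Measurable (Function.uncurry f) := by
      simp only [f, Function.uncurry_def, dotProduct]
      fun_prop
    rw [integrable_prod_iff' hm.aestronglyMeasurable]
    constructor
    · filter_upwards [ae_restrict_mem measurableSet_Ioi] with t ht
      exact (integrable_gaussian_pi n ht).const_mul (t ^ (a - 1))
    · refine (hGi.const_mul (Real.pi ^ ((n : ℝ) / 2))).congr ?_
      filter_upwards [ae_restrict_mem measurableSet_Ioi] with t ht
      rw [← hout t ht]
      refine integral_congr_ae (.of_forall fun y => ?_)
      have ht : 0 < t := ht
      exact (Real.norm_of_nonneg (by simp only [f]; positivity)).symm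
  have hswap := integral_integral_swap hint
  simp_rw [hin] at hswap
  rw [integral_mul_const, setIntegral_congr_fun measurableSet_Ioi hout, integral_const_mul,
    hG] at hswap
  rw [eq_div_iff (Real.Gamma_pos_of_pos ha0).ne', hswap]

open scoped MatrixOrder Matrix.Norms.L2Operator in
/-- The linear substitution `y = C x`, where `Λ⁻¹ = Cᵀ C`. -/
lemma integral_one_add_posDef_rpow (n : ℕ) {a : ℝ} (ha : (n : ℝ) / 2 < a)
    {Λ : Matrix (Fin n) (Fin n) ℝ} (hΛ : Λ.PosDef) :
    ∫ x : Fin n → ℝ, (1 + x ⬝ᵥ (Λ⁻¹ *ᵥ x)) ^ (-a) =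
      Real.sqrt ((Real.pi • Λ).det) * Real.Gamma (a - n / 2) / Real.Gamma a := by
  have hdet : 0 < Λ.det := hΛ.det_pos
  obtain ⟨C, hC⟩ : ∃ C : Matrix (Fin n) (Fin n) ℝ, Λ⁻¹ = Cᵀ * C := by
    obtain ⟨C, hC⟩ := CStarAlgebra.nonneg_iff_eq_star_mul_self.mp hΛ.inv.posSemidef.nonneg
    exact ⟨C, by rw [hC, star_eq_conjTranspose, conjTranspose_eq_transpose_of_trivial]⟩
  have hCdet : C.det ^ 2 = Λ.det⁻¹ := by
    have := congrArg Matrix.det hC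
    rw [det_mul, det_transpose, det_nonsing_inv, Ring.inverse_eq_inv'] at this
    rw [this, pow_two]
  have hC0 : C.det ≠ 0 := by
    intro h
    rw [h] at hCdet
    have := inv_pos.mpr hdet
    norm_num at hCdet
    exact hdet.ne hCdet
  have habs : |C.det⁻¹| = Real.sqrt Λ.det := by
    rw [← Real.sqrt_sq_eq_abs, inv_pow, hCdet, inv_inv]
  have hquad : ∀ x : Fin n → ℝ, x ⬝ᵥ (Λ⁻¹ *ᵥ x) = toLin' C x ⬝ᵥ toLin' C x := by
    intro x
    rw [hC, ← mulVec_mulVec, dotProduct_mulVec, vecMul_transpose, toLin'_apply]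
  have hcont : Continuous (toLin' C) := LinearMap.continuous_of_finiteDimensional _
  have hm : Measurable (fun y : Fin n → ℝ => (1 + y ⬝ᵥ y) ^ (-a)) := by
    simp only [dotProduct]; fun_prop
  simp_rw [hquad]
  rw [← integral_map (φ := toLin' C) (f := fun y : Fin n → ℝ => (1 + y ⬝ᵥ y) ^ (-a))
    hcont.aemeasurable hm.aestronglyMeasurable,
    Real.map_matrix_volume_pi_eq_smul_volume_pi hC0, integral_smul_measure,
    ENNReal.toReal_ofReal (abs_nonneg _), habs, integral_one_add_dotProduct_rpow n ha,
    det_smul, Fintype.card_fin, Real.sqrt_mul (by positivity), Real.sqrt_eq_rpow (Real.pi ^ n),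
    ← Real.rpow_natCast, ← Real.rpow_mul Real.pi_pos.le, smul_eq_mul, mul_one_div]
  ring

theorem stmt11 (n : ℕ) (hn : 1 ≤ n) (q : ℝ) (hq1 : 1 < q) (hq2 : q < 1 + 2 / n)
    (Λ : Matrix (Fin n) (Fin n) ℝ) (hΛ : Λ.PosDef) :
    (∫ x : Fin n → ℝ,
        ((Real.sqrt ((Real.pi • Λ).det))⁻¹ *
          (Real.Gamma (1 / (q - 1)) / Real.Gamma (1 / (q - 1) - n / 2)) *
          (1 + x ⬝ᵥ (Λ⁻¹ *ᵥ x)) ^ (1 / (1 - q))) ^ q ∂volume) =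
      ((Real.pi • Λ).det) ^ ((1 - q) / 2) *
        (Real.Gamma (q / (q - 1) - n / 2) / (Real.Gamma (1 / (q - 1) - n / 2)) ^ q) /
        (Real.Gamma (q / (q - 1)) / (Real.Gamma (1 / (q - 1))) ^ q) := by
  have hq0 : 0 < q - 1 := by linarith
  have hn0 : (0 : ℝ) < n := by exact_mod_cast hn
  have hb : (n : ℝ) / 2 < 1 / (q - 1) := by
    rw [div_lt_div_iff₀ two_pos hq0]
    have : q - 1 < 2 / n := by linarith
    rw [lt_div_iff₀ hn0] at this
    linarith
  have hab : q / (q - 1) = 1 + 1 / (q - 1) := by field_simp; ring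
  have ha : (n : ℝ) / 2 < q / (q - 1) := by linarith
  have hD : 0 < (Real.pi • Λ).det := by
    rw [det_smul]
    have := hΛ.det_pos
    positivity
  have hG1 : 0 < Real.Gamma (1 / (q - 1)) := Real.Gamma_pos_of_pos (by positivity)
  have hG2 : 0 < Real.Gamma (1 / (q - 1) - n / 2) := Real.Gamma_pos_of_pos (by linarith)
  have hs : ∀ x : Fin n → ℝ, 0 ≤ 1 + x ⬝ᵥ (Λ⁻¹ *ᵥ x) := by
    intro x
    have := hΛ.inv.posSemidef.dotProduct_mulVec_nonneg x
    simp only [star_trivial] at this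
    linarith
  have hpow : ∀ x : Fin n → ℝ, ((Real.sqrt ((Real.pi • Λ).det))⁻¹ *
          (Real.Gamma (1 / (q - 1)) / Real.Gamma (1 / (q - 1) - n / 2)) *
          (1 + x ⬝ᵥ (Λ⁻¹ *ᵥ x)) ^ (1 / (1 - q))) ^ q =
      ((Real.sqrt ((Real.pi • Λ).det))⁻¹ *
          (Real.Gamma (1 / (q - 1)) / Real.Gamma (1 / (q - 1) - n / 2))) ^ q *
        (1 + x ⬝ᵥ (Λ⁻¹ *ᵥ x)) ^ (-(q / (q - 1))) := by
    intro x
    rw [Real.mul_rpow (by positivity) (Real.rpow_nonneg (hs x) _), ← Real.rpow_mul (hs x)]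
    congr 2
    rw [← neg_sub q 1, one_div, inv_neg]
    ring
  simp_rw [hpow]
  rw [integral_const_mul, integral_one_add_posDef_rpow n ha hΛ,
    Real.mul_rpow (by positivity) (by positivity), Real.div_rpow hG1.le hG2.le]
  have hsq : (Real.sqrt ((Real.pi • Λ).det))⁻¹ ^ q * Real.sqrt ((Real.pi • Λ).det) =
      ((Real.pi • Λ).det) ^ ((1 - q) / 2) := by
    rw [Real.sqrt_eq_rpow, ← Real.rpow_neg hD.le, ← Real.rpow_mul hD.le, ← Real.rpow_add hD]
    congr 1
    ring
  rw [← hsq, div_div_eq_mul_div]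
  ring
end

section
/- Let g : ℝⁿ → ℝ be differentiable with L-Lipschitz gradient for some L > 0, let h : ℝⁿ → ℝ be convex and continuous, and let ρ ∈ (0, 1/L). Fix x̄ ∈ ℝⁿ and define Φ(y) := g(y) + h(y) + ‖y − x̄‖²/(2ρ). Then −∇g(x̄) belongs to the subdifferential ∂h(x̄) if and only if x̄ is a global minimizer of Φ; moreover, in that case x̄ is the unique global minimizer of Φ, i.e., every global minimizer of Φ equals x̄. -/
/-!
The proof rests on the descent lemma: a function whose gradient is `L`-Lipschitz differs from its
linearisation at `x` by at most `L / 2 * ‖y - x‖ ^ 2`.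

If `-∇g(x̄)` is a subgradient of `h` at `x̄`, adding the subgradient inequality to the lower descent
bound gives the quadratic growth `Φ(y) ≥ Φ(x̄) + (1/ρ - L)/2 * ‖y - x̄‖ ^ 2`. Since `1/ρ > L`, this
gives both minimality and uniqueness.

Conversely, if `x̄` minimises `Φ`, compare `Φ(x̄)` with `Φ` at `x̄ + t (y - x̄)` for `t ∈ (0, 1]`.
Convexity of `h` and the upper descent bound give `0 ≤ t A + t² B` with
`A = ⟨∇g(x̄), y - x̄⟩ + h(y) - h(x̄)`; dividing by `t` and letting `t → 0` yields `A ≥ 0`, which is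
the subgradient inequality at `y`.
-/

open RealInnerProductSpace

/-- Lower half of the descent lemma, with the gradient field `G` explicit so that it applies to
both `g` and `-g`. The function `t ↦ g (x + t d) - t ⟪G x, d⟫ + L/2 * t² ‖d‖²` is nondecreasing
on `[0, 1]`, where `d = y - x`. -/
lemma descent_lower {E : Type*} [NormedAddCommGroup E] [InnerProductSpace ℝ E]
    {L : ℝ} {g : E → ℝ} {G : E → E}
    (hg : ∀ x, HasFDerivAt g (innerSL ℝ (G x)) x)
    (hG : ∀ x y, ‖G x - G y‖ ≤ L * ‖x - y‖) (x y : E) :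
    g x + ⟪G x, y - x⟫ - L / 2 * ‖y - x‖ ^ 2 ≤ g y := by
  obtain ⟨d, rfl⟩ : ∃ d, y = x + d := ⟨y - x, by abel⟩
  rw [add_sub_cancel_left]
  let φ : ℝ → ℝ := fun t => g (x + t • d) - t * ⟪G x, d⟫ + L / 2 * ‖d‖ ^ 2 * t ^ 2
  have hφ : ∀ t, HasDerivAt φ (⟪G (x + t • d), d⟫ - ⟪G x, d⟫ + L * ‖d‖ ^ 2 * t) t := by
    intro t
    have h1 : HasDerivAt (fun t : ℝ => x + t • d) d t := by
      simpa using ((hasDerivAt_id t).smul_const d).const_add x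
    have h2 : HasDerivAt (fun t : ℝ => g (x + t • d)) ⟪G (x + t • d), d⟫ t := by
      have h := (hg (x + t • d)).comp_hasDerivAt t h1
      exact h
    have h3 := (h2.sub ((hasDerivAt_id t).mul_const ⟪G x, d⟫)).add
      (((hasDerivAt_id t).pow 2).const_mul (L / 2 * ‖d‖ ^ 2))
    refine (h3.congr_deriv ?_).congr_of_eventuallyEq (Filter.Eventually.of_forall fun s => ?_)
    · simp
      ring
    · simp [φ]
  have hmono : MonotoneOn φ (Set.Icc 0 1) := by
    apply monotoneOn_of_deriv_nonneg (convex_Icc 0 1)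
    · exact fun t _ => (hφ t).continuousAt.continuousWithinAt
    · exact fun t _ => (hφ t).differentiableAt.differentiableWithinAt
    · intro t ht
      rw [interior_Icc] at ht
      rw [(hφ t).deriv, ← inner_sub_left]
      have h1 := abs_le.1 (abs_real_inner_le_norm (G (x + t • d) - G x) d)
      have h2 := hG (x + t • d) x
      rw [add_sub_cancel_left, norm_smul, Real.norm_of_nonneg ht.1.le] at h2
      nlinarith [mul_le_mul_of_nonneg_right h2 (norm_nonneg d)]
  have h01 := hmono (by simp : (0 : ℝ) ∈ Set.Icc 0 1) (by simp : (1 : ℝ) ∈ Set.Icc 0 1) zero_le_one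
  simp only [φ, zero_smul, one_smul, add_zero] at h01
  linarith

theorem stmt13 (n : ℕ) (L ρ : ℝ) (hL : 0 < L) (hρ0 : 0 < ρ) (hρ1 : ρ < 1 / L)
    (g h : EuclideanSpace ℝ (Fin n) → ℝ)
    (hg : Differentiable ℝ g)
    (hgL : ∀ x y, ‖gradient g x - gradient g y‖ ≤ L * ‖x - y‖)
    (hhconv : ConvexOn ℝ Set.univ h) (hhcont : Continuous h)
    (xbar : EuclideanSpace ℝ (Fin n))
    (Φ : EuclideanSpace ℝ (Fin n) → ℝ)
    (hΦ : ∀ y, Φ y = g y + h y + ‖y - xbar‖ ^ 2 / (2 * ρ)) :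
    ((∀ y, h xbar + ⟪-(gradient g xbar), y - xbar⟫ ≤ h y) ↔ (∀ y, Φ xbar ≤ Φ y)) ∧
    ((∀ y, h xbar + ⟪-(gradient g xbar), y - xbar⟫ ≤ h y) →
      ∀ z, (∀ y, Φ z ≤ Φ y) → z = xbar) := by
  have hfd : ∀ x, HasFDerivAt g (innerSL ℝ (gradient g x)) x := fun x =>
    (hg x).hasGradientAt.hasFDerivAt
  have hlow := descent_lower hfd hgL xbar
  have hup : ∀ y, g y ≤ g xbar + ⟪gradient g xbar, y - xbar⟫ + L / 2 * ‖y - xbar‖ ^ 2 := by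
    intro y
    have := descent_lower (L := L) (g := fun x => -g x) (G := fun x => -gradient g x)
      (fun x => by simpa using (hfd x).fun_neg)
      (fun x y => by
        rw [neg_sub_neg, norm_sub_rev]
        exact hgL x y) xbar y
    rw [inner_neg_left] at this
    linarith
  have hΦx : Φ xbar = g xbar + h xbar := by simp [hΦ]
  have hc : 0 < 1 / (2 * ρ) - L / 2 := by
    have : L < 1 / ρ := (lt_one_div hρ0 hL).1 hρ1
    have h2 : 1 / (2 * ρ) = 1 / ρ / 2 := by field_simp
    rw [h2]
    linarith
  have hgrow : (∀ y, h xbar + ⟪-(gradient g xbar), y - xbar⟫ ≤ h y) →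
      ∀ y, Φ xbar + (1 / (2 * ρ) - L / 2) * ‖y - xbar‖ ^ 2 ≤ Φ y := by
    intro hs y
    have h1 := hs y
    have h2 := hlow y
    rw [inner_neg_left] at h1
    rw [hΦx, hΦ y, div_eq_mul_one_div (‖y - xbar‖ ^ 2)]
    linarith
  refine ⟨⟨fun hs y => ?_, fun hm y => ?_⟩, fun hs z hz => ?_⟩
  · have := hgrow hs y
    have : 0 ≤ (1 / (2 * ρ) - L / 2) * ‖y - xbar‖ ^ 2 := by positivity
    linarith
  · rw [inner_neg_left]
    set A := ⟪gradient g xbar, y - xbar⟫ + h y - h xbar with hA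
    set B := (L / 2 + 1 / (2 * ρ)) * ‖y - xbar‖ ^ 2 with hB
    have key : ∀ t : ℝ, 0 < t → t ≤ 1 → 0 ≤ A + t * B := by
      intro t ht0 ht1
      have e : xbar + t • (y - xbar) - xbar = t • (y - xbar) := add_sub_cancel_left _ _
      have h1 := hm (xbar + t • (y - xbar))
      have h2 := hup (xbar + t • (y - xbar))
      have h3 := hhconv.2 (Set.mem_univ xbar) (Set.mem_univ y) (sub_nonneg.2 ht1) ht0.le
        (sub_add_cancel 1 t)
      have e2 : (1 - t) • xbar + t • y = xbar + t • (y - xbar) := by module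
      rw [e2, smul_eq_mul, smul_eq_mul] at h3
      rw [hΦx, hΦ, e, norm_smul, Real.norm_of_nonneg ht0.le,
        div_eq_mul_one_div ((t * ‖y - xbar‖) ^ 2)] at h1
      rw [e, inner_smul_right, norm_smul, Real.norm_of_nonneg ht0.le] at h2
      have : 0 ≤ t * (A + t * B) := by
        rw [hA, hB]
        linarith
      exact nonneg_of_mul_nonneg_right this ht0
    have hlim : Filter.Tendsto (fun t : ℝ => A + t * B) (nhdsWithin 0 (Set.Ioi 0)) (nhds A) := by
      have : Continuous fun t : ℝ => A + t * B := by fun_prop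
      simpa using (this.tendsto 0).mono_left nhdsWithin_le_nhds
    have hA0 : 0 ≤ A := ge_of_tendsto hlim (by
      filter_upwards [Ioc_mem_nhdsGT (zero_lt_one' ℝ)] with t ht using key t ht.1 ht.2)
    linarith
  · have h1 := hgrow hs z
    have h2 := hz xbar
    by_contra hne
    have : 0 < ‖z - xbar‖ := norm_pos_iff.2 (sub_ne_zero.2 hne)
    have : 0 < (1 / (2 * ρ) - L / 2) * ‖z - xbar‖ ^ 2 := by positivity
    linarith
end

section
/- Let g : ℝⁿ → ℝ be differentiable with L-Lipschitz gradient for some L > 0, let h : ℝⁿ → ℝ be convex and continuous, and let ρ ∈ (0, 1/L). Suppose P : ℝⁿ → ℝⁿ is a map such that for every x ∈ ℝⁿ, P(x) is a global minimizer of y ↦ g(y) + h(y) + ‖y − x‖²/(2ρ). Then the map x ↦ ρ^{-1}(x − P(x)) is Lipschitz continuous with constant (2Lρ + 1 + √(8Lρ + 1)) / (2ρ(1 − Lρ)). -/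
/-!
Write `p = P x`, `q = P y`, `e = x - y`, `d = p - q`, `a = L ρ < 1`. First-order optimality of the
two minimizers (`prox_variational`), added together, cancels `h`; the Lipschitz bound on the gradient
then gives `(1 - a) ‖d‖² ≤ ⟪e, d⟫`, hence `(1 - a) ‖d‖ ≤ ‖e‖`. Expanding the square,
`‖e - d‖² ≤ ‖e‖² + (2 a - 1) ‖d‖² ≤ ((1 + a) / (1 - a))² ‖e‖²`,
and `(1 + a) / (1 - a)` is at most `ρ` times the claimed constant because `√(8 a + 1) ≥ 1`.
-/

theorem deriv_nonneg_of_min_right {φ : ℝ → ℝ} {m : ℝ} (hφ : HasDerivAt φ m 0)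
    (hmin : ∀ t, 0 < t → t ≤ 1 → φ 0 ≤ φ t) : 0 ≤ m := by
  have ht := hφ.tendsto_slope_zero_right
  refine ge_of_tendsto ht ?_
  filter_upwards [Ioc_mem_nhdsGT (zero_lt_one (α := ℝ))] with t ht
  have := hmin t ht.1 ht.2
  simp only [zero_add, smul_eq_mul]
  exact mul_nonneg (inv_nonneg.2 ht.1.le) (by linarith)

/-- First-order optimality of a minimizer `p` of `g + h + ‖· - x‖² / (2ρ)`: by convexity of `h`, the
objective along the segment from `p` to `q` is dominated by a differentiable function with the same
value at `p`, whose one-sided derivative there must be nonnegative. -/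
theorem prox_variational {E : Type*} [NormedAddCommGroup E] [InnerProductSpace ℝ E]
    [CompleteSpace E] {ρ : ℝ} (hρ : 0 < ρ) {g h : E → ℝ} (hg : Differentiable ℝ g)
    (hh : ConvexOn ℝ Set.univ h) {x p : E}
    (hp : ∀ y, g p + h p + ‖p - x‖ ^ 2 / (2 * ρ) ≤ g y + h y + ‖y - x‖ ^ 2 / (2 * ρ)) (q : E) :
    0 ≤ inner ℝ (gradient g p) (q - p) + (h q - h p) + inner ℝ (p - x) (q - p) / ρ := by
  have hline : HasDerivAt (fun t : ℝ => p + t • (q - p)) (q - p) 0 := by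
    simpa using ((hasDerivAt_id (0 : ℝ)).smul_const (q - p)).const_add p
  have hgd : HasDerivAt (fun t : ℝ => g (p + t • (q - p))) (inner ℝ (gradient g p) (q - p)) 0 := by
    have h1 : HasFDerivAt g (InnerProductSpace.toDual ℝ E (gradient g p)) (p + (0 : ℝ) • (q - p)) := by
      rw [zero_smul, add_zero]
      exact (hg p).hasGradientAt.hasFDerivAt
    exact h1.comp_hasDerivAt (0 : ℝ) hline
  have hlin : HasDerivAt (fun t : ℝ => t * (h q - h p)) (h q - h p) 0 := by
    simpa using (hasDerivAt_id (0 : ℝ)).mul_const (h q - h p)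
  have hquad : HasDerivAt (fun t : ℝ => ‖p + t • (q - p) - x‖ ^ 2 / (2 * ρ))
      (inner ℝ (p - x) (q - p) / ρ) 0 := by
    have h1 := ((hline.sub_const x).norm_sq).div_const (2 * ρ)
    refine h1.congr_deriv ?_
    simp only [zero_smul, add_zero]
    field_simp
  refine deriv_nonneg_of_min_right ((hgd.add hlin).add hquad) fun t ht0 ht1 => ?_
  have hc := hh.2 (Set.mem_univ p) (Set.mem_univ q) (sub_nonneg.2 ht1) ht0.le (by ring)
  have hpt : (1 - t) • p + t • q = p + t • (q - p) := by module
  rw [hpt, smul_eq_mul, smul_eq_mul] at hc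
  have := hp (p + t • (q - p))
  simp only [Pi.add_apply, zero_smul, add_zero, zero_mul]
  linarith

theorem stmt14 (n : ℕ) (L ρ : ℝ) (hL : 0 < L) (hρ0 : 0 < ρ) (hρ1 : ρ < 1 / L)
    (g h : EuclideanSpace ℝ (Fin n) → ℝ)
    (hg : Differentiable ℝ g)
    (hgL : ∀ x y, ‖gradient g x - gradient g y‖ ≤ L * ‖x - y‖)
    (hhconv : ConvexOn ℝ Set.univ h) (hhcont : Continuous h)
    (P : EuclideanSpace ℝ (Fin n) → EuclideanSpace ℝ (Fin n))
    (hP : ∀ x y, g (P x) + h (P x) + ‖P x - x‖ ^ 2 / (2 * ρ) ≤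
      g y + h y + ‖y - x‖ ^ 2 / (2 * ρ)) :
    ∀ x y, ‖ρ⁻¹ • (x - P x) - ρ⁻¹ • (y - P y)‖ ≤
      ((2 * L * ρ + 1 + Real.sqrt (8 * L * ρ + 1)) / (2 * ρ * (1 - L * ρ))) * ‖x - y‖ := by
  intro x y
  have h1 := prox_variational hρ0 hg hhconv (hP x) (P y)
  have h2 := prox_variational hρ0 hg hhconv (hP y) (P x)
  have ha1 : 0 < 1 - L * ρ := by
    rw [lt_div_iff₀ hL] at hρ1
    linarith
  have ha0 : 0 < L * ρ := mul_pos hL hρ0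
  set p := P x
  set q := P y
  have hsum : 0 ≤ inner ℝ (gradient g q - gradient g p) (p - q)
      + inner ℝ ((x - y) - (p - q)) (p - q) / ρ := by
    have e1 : inner ℝ (gradient g q - gradient g p) (p - q) =
        inner ℝ (gradient g p) (q - p) + inner ℝ (gradient g q) (p - q) := by
      rw [← neg_sub p q, inner_neg_right, inner_sub_left]; ring
    have e2 : inner ℝ ((x - y) - (p - q)) (p - q) =
        inner ℝ (p - x) (q - p) + inner ℝ (q - y) (p - q) := by
      rw [← neg_sub p q, inner_neg_right, ← inner_neg_left, ← inner_add_left]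
      congr 1; abel
    rw [e1, e2, add_div]
    linarith
  have hcs : inner ℝ (gradient g q - gradient g p) (p - q) ≤ L * ‖p - q‖ ^ 2 := by
    refine (real_inner_le_norm _ _).trans ?_
    have := mul_le_mul_of_nonneg_right (hgL q p) (norm_nonneg (p - q))
    rw [norm_sub_rev q p] at this
    linarith
  generalize hd : p - q = d at *
  generalize he : x - y = e at *
  have hmono : (1 - L * ρ) * ‖d‖ ^ 2 ≤ inner ℝ e d := by
    have h3 : 0 ≤ L * ‖d‖ ^ 2 + inner ℝ (e - d) d / ρ := by linarith
    have h4 := mul_nonneg h3 hρ0.le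
    rw [add_mul, div_mul_cancel₀ _ hρ0.ne', inner_sub_left, real_inner_self_eq_norm_sq] at h4
    linarith
  have hde : (1 - L * ρ) * ‖d‖ ≤ ‖e‖ := by
    have h3 := hmono.trans (real_inner_le_norm e d)
    rcases (norm_nonneg d).eq_or_lt with h0 | h0
    · rw [← h0, mul_zero]; exact norm_nonneg e
    · refine le_of_mul_le_mul_right ?_ h0
      linarith
  have hmain : (1 - L * ρ) * ‖e - d‖ ≤ (1 + L * ρ) * ‖e‖ := by
    refine le_of_sq_le_sq ?_ (by positivity)
    have h3 : ‖e - d‖ ^ 2 ≤ ‖e‖ ^ 2 + (2 * (L * ρ) - 1) * ‖d‖ ^ 2 := by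
      rw [norm_sub_sq_real]; linarith
    have h4 : ((1 - L * ρ) * ‖d‖) ^ 2 ≤ ‖e‖ ^ 2 :=
      pow_le_pow_left₀ (by positivity) hde 2
    have h5 := mul_le_mul_of_nonneg_left h3 (sq_nonneg (1 - L * ρ))
    have h6 := mul_le_mul_of_nonneg_left h4 ha0.le
    have h7 : 0 ≤ L * ρ * ‖e‖ ^ 2 := by positivity
    have h8 : 0 ≤ ((1 - L * ρ) * ‖d‖) ^ 2 := sq_nonneg _
    nlinarith
  have hs : 1 ≤ Real.sqrt (8 * L * ρ + 1) := by
    rw [Real.one_le_sqrt]; linarith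
  have hvec : ρ⁻¹ • (x - p) - ρ⁻¹ • (y - q) = ρ⁻¹ • (e - d) := by
    rw [← he, ← hd]; module
  rw [hvec, norm_smul, Real.norm_of_nonneg (inv_nonneg.2 hρ0.le), div_mul_eq_mul_div,
    le_div_iff₀ (by positivity)]
  calc ρ⁻¹ * ‖e - d‖ * (2 * ρ * (1 - L * ρ)) = 2 * ((1 - L * ρ) * ‖e - d‖) := by
        field_simp
    _ ≤ 2 * ((1 + L * ρ) * ‖e‖) := by linarith
    _ = (2 * L * ρ + 1 + 1) * ‖e‖ := by ring
    _ ≤ _ := by gcongr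
end

section
/- Let L > 0, let g : ℝⁿ → ℝ be differentiable with L-Lipschitz gradient, let h : ℝⁿ → ℝ be convex and continuous, and let ρ > 0. Suppose P : ℝⁿ → ℝⁿ is a map such that for every z ∈ ℝⁿ, P(z) is a global minimizer of y ↦ h(y) + ‖y − z‖²/(2ρ). Then the map G_ρ : ℝⁿ → ℝⁿ defined by G_ρ(x) := ρ^{-1}( x − P(x − ρ·∇g(x)) ) is Lipschitz continuous with constant L + ρ^{-1}. -/
/-!
The proximal map `P` is firmly nonexpansive: `‖P z - P z'‖² ≤ ⟪P z - P z', z - z'⟫`, so the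
reflection `2 P - id` is nonexpansive. Put `d = x - y`, `w = ∇g x - ∇g y`, and let `p` be the
difference of the values of `P` at `x - ρ ∇g x` and `y - ρ ∇g y`. Then
`2 (d - p) = (d + ρ w) - (2 p - (d - ρ w))`, whence
`2 ‖d - p‖ ≤ ‖d + ρ w‖ + ‖d - ρ w‖ ≤ 2 (‖d‖ + ρ ‖w‖) ≤ 2 (1 + ρ L) ‖d‖`.
(Nonexpansiveness of `P` or `id - P` alone would give a weaker constant.)
-/

/-- First-order optimality of a proximal point `a` of `z`: `(z - a) / ρ` is a subgradient of `h`
at `a`. It follows by comparing `a` with `a + t (b - a)` and letting `t → 0`. -/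
lemma prox_subgradient {E : Type*} [NormedAddCommGroup E] [InnerProductSpace ℝ E]
    {h : E → ℝ} {ρ : ℝ} (hρ : 0 < ρ) (hh : ConvexOn ℝ Set.univ h) {z a : E}
    (ha : ∀ y, h a + ‖a - z‖ ^ 2 / (2 * ρ) ≤ h y + ‖y - z‖ ^ 2 / (2 * ρ)) (b : E) :
    ρ * (h a - h b) ≤ inner ℝ (a - z) (b - a) := by
  have key : ∀ t : ℝ, 0 < t → t < 1 →
      2 * ρ * (h a - h b) ≤ 2 * inner ℝ (a - z) (b - a) + t * ‖b - a‖ ^ 2 := by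
    intro t ht0 ht1
    have h1 := ha (a + t • (b - a))
    have h2 := hh.2 (Set.mem_univ a) (Set.mem_univ b) (by linarith : (0 : ℝ) ≤ 1 - t) ht0.le
      (by ring)
    have e1 : (1 - t) • a + t • b = a + t • (b - a) := by module
    have e2 : a + t • (b - a) - z = (a - z) + t • (b - a) := by abel
    have e3 : ‖(a - z) + t • (b - a)‖ ^ 2
        = ‖a - z‖ ^ 2 + 2 * t * inner ℝ (a - z) (b - a) + t ^ 2 * ‖b - a‖ ^ 2 := by
      rw [norm_add_sq_real, inner_smul_right, norm_smul, mul_pow, Real.norm_eq_abs, sq_abs]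
      ring
    rw [e1] at h2
    simp only [smul_eq_mul] at h2
    rw [e2, e3] at h1
    have h3 : t * (h a - h b)
        ≤ (2 * t * inner ℝ (a - z) (b - a) + t ^ 2 * ‖b - a‖ ^ 2) / (2 * ρ) := by
      rw [add_assoc (‖a - z‖ ^ 2), add_div] at h1
      linarith
    rw [le_div_iff₀ (by positivity)] at h3
    refine le_of_mul_le_mul_left ?_ ht0
    linarith
  have hlim : Filter.Tendsto (fun t : ℝ => 2 * inner ℝ (a - z) (b - a) + t * ‖b - a‖ ^ 2)
      (nhdsWithin 0 (Set.Ioi 0)) (nhds (2 * inner ℝ (a - z) (b - a) + 0 * ‖b - a‖ ^ 2)) :=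
    (Continuous.tendsto (by fun_prop) 0).mono_left nhdsWithin_le_nhds
  have := ge_of_tendsto hlim (by
    filter_upwards [Ioo_mem_nhdsGT (zero_lt_one (α := ℝ))] with t ht
    exact key t ht.1 ht.2)
  linarith

/-- The reflection `2 P - id` of a proximal map is nonexpansive (an equivalent form of firm
nonexpansiveness of `P`). -/
lemma prox_reflection_nonexpansive {E : Type*} [NormedAddCommGroup E] [InnerProductSpace ℝ E]
    {h : E → ℝ} {ρ : ℝ} (hρ : 0 < ρ) (hh : ConvexOn ℝ Set.univ h) {P : E → E}
    (hP : ∀ z y, h (P z) + ‖P z - z‖ ^ 2 / (2 * ρ) ≤ h y + ‖y - z‖ ^ 2 / (2 * ρ)) (u v : E) :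
    ‖(2 : ℝ) • (P u - P v) - (u - v)‖ ≤ ‖u - v‖ := by
  have h1 := prox_subgradient hρ hh (hP u) (P v)
  have h2 := prox_subgradient hρ hh (hP v) (P u)
  have h3 : inner ℝ (P u - u) (P v - P u) + inner ℝ (P v - v) (P u - P v)
      = inner ℝ (P u - P v) (u - v) - ‖P u - P v‖ ^ 2 := by
    rw [← real_inner_self_eq_norm_sq, ← inner_sub_right, ← neg_sub (P u) (P v),
      inner_neg_right, neg_add_eq_sub, ← inner_sub_left, real_inner_comm]
    congr 1
    abel
  refine le_of_sq_le_sq ?_ (norm_nonneg _)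
  rw [norm_sub_sq_real, inner_smul_left, norm_smul, mul_pow]
  norm_num
  linarith

theorem stmt17 (n : ℕ) (L ρ : ℝ) (hL : 0 < L) (hρ : 0 < ρ)
    (g h : EuclideanSpace ℝ (Fin n) → ℝ)
    (hg : Differentiable ℝ g)
    (hgL : ∀ x y, ‖gradient g x - gradient g y‖ ≤ L * ‖x - y‖)
    (hhconv : ConvexOn ℝ Set.univ h) (hhcont : Continuous h)
    (P : EuclideanSpace ℝ (Fin n) → EuclideanSpace ℝ (Fin n))
    (hP : ∀ z y, h (P z) + ‖P z - z‖ ^ 2 / (2 * ρ) ≤ h y + ‖y - z‖ ^ 2 / (2 * ρ)) :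
    ∀ x y,
      ‖ρ⁻¹ • (x - P (x - ρ • gradient g x)) - ρ⁻¹ • (y - P (y - ρ • gradient g y))‖ ≤
        (L + ρ⁻¹) * ‖x - y‖ := by
  intro x y
  have hR := prox_reflection_nonexpansive hρ hhconv hP
    (x - ρ • gradient g x) (y - ρ • gradient g y)
  have hw := hgL x y
  generalize P (x - ρ • gradient g x) = a at *
  generalize P (y - ρ • gradient g y) = b at *
  generalize gradient g x = s at *
  generalize gradient g y = t at *
  have hρw : ‖ρ • (s - t)‖ ≤ ρ * (L * ‖x - y‖) := by
    rw [norm_smul, Real.norm_of_nonneg hρ.le]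
    gcongr
  have e1 : x - ρ • s - (y - ρ • t) = (x - y) - ρ • (s - t) := by module
  rw [e1] at hR
  have e2 : (2 : ℝ) • ((x - a) - (y - b))
      = ((x - y) + ρ • (s - t)) - ((2 : ℝ) • (a - b) - ((x - y) - ρ • (s - t))) := by module
  have h2 : 2 * ‖(x - a) - (y - b)‖ ≤ 2 * (‖x - y‖ + ρ * (L * ‖x - y‖)) := by
    calc 2 * ‖(x - a) - (y - b)‖ = ‖(2 : ℝ) • ((x - a) - (y - b))‖ := by
          rw [norm_smul, Real.norm_of_nonneg zero_le_two]
      _ ≤ ‖(x - y) + ρ • (s - t)‖ + ‖(2 : ℝ) • (a - b) - ((x - y) - ρ • (s - t))‖ := by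
          rw [e2]
          exact norm_sub_le _ _
      _ ≤ 2 * (‖x - y‖ + ρ * (L * ‖x - y‖)) := by
          linarith [norm_add_le (x - y) (ρ • (s - t)), norm_sub_le (x - y) (ρ • (s - t))]
  rw [← smul_sub, norm_smul, norm_inv, Real.norm_of_nonneg hρ.le]
  calc ρ⁻¹ * ‖(x - a) - (y - b)‖ ≤ ρ⁻¹ * (‖x - y‖ + ρ * (L * ‖x - y‖)) := by
        gcongr
        linarith
    _ = (L + ρ⁻¹) * ‖x - y‖ := by
        field_simp
        ring
end
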